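/- Fix integers d ≥ 7 and x = 1 + ⌈3d/2⌉. A set S of x points in P^3 belongs to T(3,d;x)' if and only if S is contained in a rational normal curve of P^3 (a twisted cubic). -/

import Mathlib

open MvPolynomial

noncomputable section

/-- Projective `n`-space over `k`, as the projectivization of `k^(n+1)`. -/
abbrev ProjSpace (k : Type*) [Field k] (n : ℕ) := Projectivization k (Fin (n+1) → k)

variable (k : Type*) [Field k]

/-- Evaluation at a vector, as a linear map on polynomials. -/
def evalLM {n : ℕ} (v : Fin n → k) : MvPolynomial (Fin n) k →ₗ[k] k :=
  (MvPolynomial.aeval v).toLinearMap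

/-- The submodule of polynomials vanishing together with all first partial derivatives at `v`. -/
def doubleVanishing {n : ℕ} (v : Fin n → k) : Submodule k (MvPolynomial (Fin n) k) :=
  LinearMap.ker (evalLM k v) ⊓
    ⨅ i : Fin n, LinearMap.ker ((evalLM k v).comp (MvPolynomial.pderiv i).toLinearMap)

/-- `h^0(I_{2S}(d))`: dimension of degree-`d` forms vanishing doubly at all points of `S`. -/
def h0 (n d : ℕ) (S : Finset (ProjSpace k n)) : ℕ :=
  Module.finrank k
    ↥(homogeneousSubmodule (Fin (n+1)) k d ⊓ ⨅ p ∈ S, doubleVanishing k p.rep)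

/-- `h^1(I_{2S}(d)) = h^0(I_{2S}(d)) + (n+1)#S - C(n+d,n)`. -/
def h1 (n d : ℕ) (S : Finset (ProjSpace k n)) : ℤ :=
  (h0 k n d S : ℤ) + (n+1) * S.card - (n+d).choose n

/-- `S` spans `P^n`: it is contained in no hyperplane. -/
def Spans (n : ℕ) (S : Finset (ProjSpace k n)) : Prop :=
  Submodule.span k (Projectivization.rep '' (S : Set (ProjSpace k n))) = ⊤

/-- The Terracini locus `T(n,d;x)`. -/
def Terracini (n d x : ℕ) : Set (Finset (ProjSpace k n)) :=
  {S | S.card = x ∧ Spans k n S ∧ 0 < h0 k n d S ∧ 0 < h1 k n d S}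

/-- The minimally Terracini locus `T(n,d;x)'`. -/
def minTerracini (n d x : ℕ) : Set (Finset (ProjSpace k n)) :=
  {S | S ∈ Terracini k n d x ∧ ∀ A : Finset (ProjSpace k n), A ⊂ S → h1 k n d A = 0}

end
/-- The `i`-th coordinate `s^(n-i) t^i` of the standard rational normal curve of degree `n`. -/
def stdRNCvec (k : Type*) [Field k] (n : ℕ) (s t : k) : Fin (n+1) → k :=
  fun i => s ^ (n - (i : ℕ)) * t ^ (i : ℕ)

/-- The standard rational normal curve in `P^n`: the image of
`[s:t] ↦ [s^n : s^(n-1)t : ⋯ : t^n]`. -/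
def stdRNC (k : Type*) [Field k] (n : ℕ) : Set (ProjSpace k n) :=
  {p | ∃ s t : k, (s ≠ 0 ∨ t ≠ 0) ∧
    Projectivization.submodule p = Submodule.span k {stdRNCvec k n s t}}

/-- A rational normal curve in `P^n`: a curve projectively equivalent to the standard one. -/
def IsRNC (k : Type*) [Field k] (n : ℕ) (C : Set (ProjSpace k n)) : Prop :=
  ∃ g : (Fin (n+1) → k) ≃ₗ[k] (Fin (n+1) → k),
    C = {p | ∃ s t : k, (s ≠ 0 ∨ t ≠ 0) ∧
      Projectivization.submodule p = Submodule.span k {g (stdRNCvec k n s t)}}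

/-!
Forms of degree `d` fail to separate the double points of `S` exactly when there are vectors
`w i`, not all zero, with `∑ i, ∂_{w i} F (p i) = 0` for all forms `F` of degree `d`. Such a
relation lives on a scheme `Z` of degree at most `2 #S`, with a point or a tangent vector at each
`p i`. Multiplying test forms by an equation of a plane or a quadric turns it into a relation of
lower degree on the residual scheme. Choosing planes of maximal contact, minimality of `S` and
`#S = 1 + ⌈3d/2⌉` leave no room for planes meeting `Z` in large degree; hence, after three planes
are removed, the residual scheme shows that the quadrics through few of the points contain all of
them, and Castelnuovo's argument puts `S` on a twisted cubic.

Conversely, on a rational normal curve of degree `n` the quadrics through the curve force every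
relation to be tangent to the curve. It pulls back to a relation of degree `n d` on `P^1`, and
there `m` double points are independent if and only if `2 m ≤ n d + 1`.
-/

open Finset MvPolynomial
open LinearMap (ker)
open Module (Dual finrank)
open Submodule (span mem_span_singleton_self)

namespace Terracini

noncomputable section

section Jets

variable {k : Type*} [Field k] {n : ℕ}

/-! ### Directional derivatives and linear forms -/

/-- The derivative at `p` along `w`, bilinear in the direction `w` and the polynomial. -/
def dirDeriv (p : Fin n → k) : (Fin n → k) →ₗ[k] Dual k (MvPolynomial (Fin n) k) :=
  Fintype.linearCombination k fun j => (evalLM k p).comp (pderiv j).toLinearMap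

lemma dirDeriv_apply (p w : Fin n → k) (F : MvPolynomial (Fin n) k) :
    dirDeriv p w F = ∑ j, w j * eval p (pderiv j F) := by
  simp [dirDeriv, Fintype.linearCombination_apply, evalLM, aeval_eq_eval]

lemma dirDeriv_mul (p w : Fin n → k) (F G : MvPolynomial (Fin n) k) :
    dirDeriv p w (F * G) = dirDeriv p w F * eval p G + eval p F * dirDeriv p w G := by
  simp only [dirDeriv_apply, Derivation.leibniz, map_add, smul_eq_mul, map_mul, mul_sum, sum_mul,
    ← sum_add_distrib]
  exact sum_congr rfl fun j _ => by ring

lemma dirDeriv_C (p w : Fin n → k) (c : k) : dirDeriv p w (C c) = 0 := by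
  simp [dirDeriv_apply]

lemma dirDeriv_X (p w : Fin n → k) (i : Fin n) : dirDeriv p w (X i) = w i := by
  simp [dirDeriv_apply, pderiv_X, Pi.single_apply, apply_ite]

lemma dirDeriv_self {F : MvPolynomial (Fin n) k} {e : ℕ} (hF : F.IsHomogeneous e)
    (p : Fin n → k) : dirDeriv p p F = e * eval p F := by
  simpa [dirDeriv_apply] using congrArg (eval p) hF.sum_X_mul_pderiv

/-- The homogeneous polynomial of degree one attached to a linear functional. -/
def linForm : Dual k (Fin n → k) →ₗ[k] MvPolynomial (Fin n) k where
  toFun l := ∑ j, l (Pi.single j 1) • X j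
  map_add' l m := by simp [add_smul, sum_add_distrib]
  map_smul' c l := by simp [smul_sum, mul_smul]

lemma linForm_apply (l : Dual k (Fin n → k)) : linForm l = ∑ j, l (Pi.single j 1) • X j := rfl

lemma isHomogeneous_linForm (l : Dual k (Fin n → k)) : (linForm l).IsHomogeneous 1 :=
  .sum _ _ _ fun _ _ => (homogeneousSubmodule _ k 1).smul_mem _ (isHomogeneous_X k _)

lemma sum_dual_single_mul {κ : Type*} [Fintype κ] [DecidableEq κ] (l : Dual k (κ → k))
    (v : κ → k) :
    ∑ j, l (Pi.single j 1) * v j = l v := by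
  conv_rhs => rw [← univ_sum_single v, map_sum]
  refine sum_congr rfl fun j _ => ?_
  rw [mul_comm, ← smul_eq_mul, ← map_smul, ← Pi.single_smul, smul_eq_mul, mul_one]

@[simp]
lemma eval_linForm (l : Dual k (Fin n → k)) (p : Fin n → k) : eval p (linForm l) = l p := by
  simp [linForm_apply, smul_eval, sum_dual_single_mul]

@[simp]
lemma dirDeriv_linForm (p w : Fin n → k) (l : Dual k (Fin n → k)) :
    dirDeriv p w (linForm l) = l w := by
  simp [linForm_apply, dirDeriv_X, sum_dual_single_mul]

/-! ### Jets -/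

/-- A first-order functional `F ↦ coeff * F p + ∂_dir F p` on polynomials, without its base point
`p`. When `dir` is not proportional to `p`, it is carried by the subscheme of degree two at
`p` tangent to `dir`, by the reduced point `p` if `dir = 0`, and by nothing if it vanishes. -/
structure Jet (k : Type*) [Field k] (n : ℕ) where
  /-- the coefficient of the value at the base point -/
  coeff : k
  /-- the direction of differentiation -/
  dir : Fin n → k

namespace Jet

/-- The linear functional defined by a jet based at `p`. -/
def functional (p : Fin n → k) (z : Jet k n) : Dual k (MvPolynomial (Fin n) k) :=
  z.coeff • evalLM k p + dirDeriv p z.dir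

lemma functional_apply (p : Fin n → k) (z : Jet k n) (F : MvPolynomial (Fin n) k) :
    z.functional p F = z.coeff * eval p F + dirDeriv p z.dir F := by
  simp [functional, evalLM, aeval_eq_eval]

/-- The jet based at `p` whose functional is `F ↦ z.functional p (F * G)`; it is carried by the
residual scheme of the scheme carrying `z` with respect to the hypersurface `G = 0`. -/
def residual (G : MvPolynomial (Fin n) k) (p : Fin n → k) (z : Jet k n) : Jet k n where
  coeff := z.functional p G
  dir := eval p G • z.dir

lemma functional_residual (G : MvPolynomial (Fin n) k) (p : Fin n → k) (z : Jet k n)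
    (F : MvPolynomial (Fin n) k) :
    (z.residual G p).functional p F = z.functional p (F * G) := by
  simp only [functional_apply, residual, map_smul, LinearMap.smul_apply, smul_eq_mul, map_mul,
    dirDeriv_mul]
  ring

lemma residual_residual (G H : MvPolynomial (Fin n) k) (p : Fin n → k) (z : Jet k n) :
    (z.residual H p).residual G p = z.residual (G * H) p := by
  rw [residual, functional_residual]
  simp only [residual, map_mul, smul_smul]

open scoped Classical in
/-- The degree of the scheme carrying a jet. -/
def deg (z : Jet k n) : ℕ := if z.dir = 0 then if z.coeff = 0 then 0 else 1 else 2

open scoped Classical in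
/-- The degree of the intersection of the scheme carrying a jet based at `p` with a linear
subspace `L`. -/
def degIn (L : Submodule k (Fin n → k)) (p : Fin n → k) (z : Jet k n) : ℕ :=
  if p ∈ L then if z.dir ∈ L then z.deg else 1 else 0

variable {L L' : Submodule k (Fin n → k)} {p : Fin n → k} {z : Jet k n}

lemma deg_le_two (z : Jet k n) : z.deg ≤ 2 := by
  unfold deg; split_ifs <;> omega

lemma deg_of_dir_ne_zero (h : z.dir ≠ 0) : z.deg = 2 := if_neg h

lemma deg_le_one_iff : z.deg ≤ 1 ↔ z.dir = 0 := by
  unfold deg; split_ifs <;> simp_all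

lemma deg_eq_zero_iff : z.deg = 0 ↔ z.coeff = 0 ∧ z.dir = 0 := by
  unfold deg; split_ifs <;> simp_all

lemma functional_of_deg_eq_zero (h : z.deg = 0) : z.functional p = 0 := by
  obtain ⟨hc, hd⟩ := deg_eq_zero_iff.1 h
  simp [functional, hc, hd]

lemma degIn_top (p : Fin n → k) (z : Jet k n) : z.degIn ⊤ p = z.deg := by simp [degIn]

lemma degIn_of_notMem (h : p ∉ L) : z.degIn L p = 0 := if_neg h

lemma mem_of_degIn_ne_zero (h : z.degIn L p ≠ 0) : p ∈ L := not_imp_comm.1 degIn_of_notMem h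

lemma degIn_mono (h : L ≤ L') (p : Fin n → k) (z : Jet k n) : z.degIn L p ≤ z.degIn L' p := by
  have hp := @h p
  have hd := @h z.dir
  unfold degIn deg
  split_ifs <;> first | omega | (exfalso; simp_all)

lemma degIn_le_deg (L : Submodule k (Fin n → k)) (p : Fin n → k) (z : Jet k n) :
    z.degIn L p ≤ z.deg :=
  (degIn_mono le_top p z).trans_eq (degIn_top p z)

lemma degIn_congr (hp : p ∈ L ↔ p ∈ L') (hd : z.dir ∈ L ↔ z.dir ∈ L') :
    z.degIn L p = z.degIn L' p := by
  unfold degIn; split_ifs <;> grind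

lemma le_degIn_of_mem {m : ℕ} (hm : m ≤ z.deg) (hp : 1 ≤ m → p ∈ L) (hd : 2 ≤ m → z.dir ∈ L) :
    m ≤ z.degIn L p := by
  unfold degIn
  split_ifs <;> grind

lemma degIn_residual_le (L : Submodule k (Fin n → k)) (G : MvPolynomial (Fin n) k)
    (p : Fin n → k) (z : Jet k n) : (z.residual G p).degIn L p ≤ z.degIn L p := by
  have hmem : eval p G ≠ 0 → (eval p G • z.dir ∈ L ↔ z.dir ∈ L) := L.smul_mem_iff
  by_cases hG : eval p G = 0 <;> by_cases hd : z.dir = 0 <;> by_cases hc : z.coeff = 0 <;>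
    simp [degIn, deg, residual, functional_apply, hG, hd, hc] <;> grind

lemma deg_residual_le (G : MvPolynomial (Fin n) k) (p : Fin n → k) (z : Jet k n) :
    (z.residual G p).deg ≤ z.deg := by
  simpa only [degIn_top] using degIn_residual_le ⊤ G p z

lemma deg_residual_linForm_add_degIn (l : Dual k (Fin n → k)) (p : Fin n → k) (z : Jet k n) :
    (z.residual (linForm l) p).deg + z.degIn (ker l) p = z.deg := by
  by_cases hp : l p = 0 <;> by_cases hd : z.dir = 0 <;> by_cases hl : l z.dir = 0 <;>
    by_cases hc : z.coeff = 0 <;>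
    simp_all [degIn, deg, residual, functional_apply]

lemma deg_residual_le_one {G : MvPolynomial (Fin n) k} (hG : eval p G = 0) :
    (z.residual G p).deg ≤ 1 :=
  deg_le_one_iff.2 (by simp [residual, hG])

lemma deg_residual_add_le {G : MvPolynomial (Fin n) k} {m : ℕ} (hm : m ≤ z.deg)
    (hp : 1 ≤ m → eval p G = 0) (hd : 2 ≤ m → dirDeriv p z.dir G = 0) :
    (z.residual G p).deg + m ≤ z.deg := by
  have hz := z.deg_le_two
  obtain rfl | rfl | rfl : m = 0 ∨ m = 1 ∨ m = 2 := by omega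
  · exact deg_residual_le G p z
  · by_cases hdir : z.dir = 0
    · simpa [deg, residual, functional_apply, hp le_rfl, hdir] using hm
    · have := deg_residual_le_one (z := z) (hp le_rfl)
      rw [deg_of_dir_ne_zero hdir]
      omega
  · have : (z.residual G p).deg = 0 :=
      deg_eq_zero_iff.2 (by simp [residual, functional_apply, hp, hd])
    omega

lemma deg_residual_add_deg_residual_le {G H : MvPolynomial (Fin n) k}
    (h : ((z.residual G p).residual H p).deg = 0) :
    (z.residual H p).deg + (z.residual G p).deg ≤ z.deg := by
  rw [deg_eq_zero_iff] at h
  by_cases hd : z.dir = 0 <;> by_cases hc : z.coeff = 0 <;> by_cases hG : eval p G = 0 <;>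
    by_cases hH : eval p H = 0 <;> by_cases hdG : dirDeriv p z.dir G = 0 <;>
    by_cases hdH : dirDeriv p z.dir H = 0 <;>
    simp_all [deg, residual, functional_apply]

lemma eval_eq_zero_of_deg_residual_eq_zero {G : MvPolynomial (Fin n) k}
    (hz : z.deg ≠ 0) (h : (z.residual G p).deg = 0) : eval p G = 0 := by
  by_contra hG
  obtain ⟨hcoeff, hdir⟩ := deg_eq_zero_iff.1 h
  have hd : z.dir = 0 := (smul_eq_zero.1 hdir).resolve_left hG
  refine hz (deg_eq_zero_iff.2 ⟨?_, hd⟩)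
  simpa [residual, functional_apply, hd, hG] using hcoeff

end Jet

/-! ### Families of jets -/

variable {ι : Type*}

/-- The residual of each jet of a family based at the points `p i`. -/
def residual (G : MvPolynomial (Fin n) k) (p : ι → Fin n → k) (Z : ι → Jet k n) : ι → Jet k n :=
  fun i => (Z i).residual G (p i)

/-- The base points are distinct in projective space and no nonzero direction is radial, so that
degrees of jets are degrees of actual subschemes of projective space. -/
structure IsAdmissible (p : ι → Fin n → k) (Z : ι → Jet k n) : Prop where
  ne_zero : ∀ i, p i ≠ 0
  notMem_span : ∀ i j, i ≠ j → p j ∉ span k {p i}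
  dir_notMem_span : ∀ i, (Z i).dir ≠ 0 → (Z i).dir ∉ span k {p i}

lemma residual_residual (G H : MvPolynomial (Fin n) k) (p : ι → Fin n → k) (Z : ι → Jet k n) :
    residual G p (residual H p Z) = residual (G * H) p Z :=
  funext fun i => (Z i).residual_residual G H (p i)

lemma IsAdmissible.residual {p : ι → Fin n → k} {Z : ι → Jet k n} (h : IsAdmissible p Z)
    (G : MvPolynomial (Fin n) k) : IsAdmissible p (residual G p Z) where
  ne_zero := h.ne_zero
  notMem_span := h.notMem_span
  dir_notMem_span i hi hmem := by
    obtain ⟨hG, hd⟩ : eval (p i) G ≠ 0 ∧ (Z i).dir ≠ 0 := smul_ne_zero_iff.1 hi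
    exact h.dir_notMem_span i hd ((Submodule.smul_mem_iff _ hG).1 hmem)

variable [Fintype ι]

/-- The total degree of the scheme carrying a family of jets. -/
def deg (Z : ι → Jet k n) : ℕ := ∑ i, (Z i).deg

/-- The total degree of the intersection with the linear subspace `L` of the scheme carrying a
family of jets based at the points `p i`. -/
def degIn (L : Submodule k (Fin n → k)) (p : ι → Fin n → k) (Z : ι → Jet k n) : ℕ :=
  ∑ i, (Z i).degIn L (p i)

/-- The functionals of the jets `Z i` based at `p i` sum to zero on forms of degree `e`. -/
def IsRelation (e : ℕ) (p : ι → Fin n → k) (Z : ι → Jet k n) : Prop :=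
  ∀ F : MvPolynomial (Fin n) k, F.IsHomogeneous e → ∑ i, (Z i).functional (p i) F = 0

lemma IsRelation.residual {e m : ℕ} {p : ι → Fin n → k} {Z : ι → Jet k n}
    (h : IsRelation (e + m) p Z) {G : MvPolynomial (Fin n) k} (hG : G.IsHomogeneous m) :
    IsRelation e p (residual G p Z) := fun F hF => by
  simpa only [Terracini.residual, Jet.functional_residual] using h (F * G) (hF.mul hG)

variable (L : Submodule k (Fin n → k)) (p : ι → Fin n → k) (Z : ι → Jet k n)

lemma degIn_le_deg : degIn L p Z ≤ deg Z := sum_le_sum fun i _ => (Z i).degIn_le_deg L (p i)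

lemma deg_residual_linForm_add_degIn (l : Dual k (Fin n → k)) :
    deg (residual (linForm l) p Z) + degIn (ker l) p Z = deg Z := by
  unfold deg degIn
  rw [← sum_add_distrib]
  exact sum_congr rfl fun i _ => (Z i).deg_residual_linForm_add_degIn l (p i)

lemma degIn_residual_le (G : MvPolynomial (Fin n) k) : degIn L p (residual G p Z) ≤ degIn L p Z :=
  sum_le_sum fun i _ => (Z i).degIn_residual_le L G (p i)

lemma deg_residual_le (G : MvPolynomial (Fin n) k) : deg (residual G p Z) ≤ deg Z :=
  sum_le_sum fun i _ => (Z i).deg_residual_le G (p i)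

variable {L p Z}

lemma deg_eq_zero_iff : deg Z = 0 ↔ ∀ i, (Z i).deg = 0 := by simp [deg]

lemma exists_deg_pos (h : 0 < deg Z) : ∃ i, 0 < (Z i).deg := by
  by_contra! hZ
  exact h.ne' (deg_eq_zero_iff.2 fun i => Nat.le_zero.1 (hZ i))

lemma degIn_eq_deg_iff : degIn L p Z = deg Z ↔ ∀ i, (Z i).degIn L (p i) = (Z i).deg := by
  simpa [deg, degIn] using sum_eq_sum_iff_of_le fun i (_ : i ∈ univ) => (Z i).degIn_le_deg L (p i)

lemma deg_residual_add_deg_residual_le {G H : MvPolynomial (Fin n) k}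
    (h : deg (residual H p (residual G p Z)) = 0) :
    deg (residual H p Z) + deg (residual G p Z) ≤ deg Z := by
  unfold deg
  rw [← sum_add_distrib]
  exact sum_le_sum fun i _ => Jet.deg_residual_add_deg_residual_le (deg_eq_zero_iff.1 h i)

end Jets

section Contact

variable {k : Type*} [Field k] {n : ℕ} {ι : Type*} [Fintype ι] {p : ι → Fin n → k}
  {Z : ι → Jet k n} {L : Submodule k (Fin n → k)} {e : ℕ}

/-! ### Hyperplanes and hypersurfaces with prescribed contact -/

lemma ne_top_of_finrank_lt (h : finrank k L < n) : L ≠ ⊤ := by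
  rintro rfl
  simp at h

lemma exists_dual_le_ker_forall_ne_zero [Infinite k] {V : Type*} [AddCommGroup V] [Module k V]
    {L : Submodule k V} (hL : L ≠ ⊤) (T : Finset V) (hT : ∀ v ∈ T, v ∉ L) :
    ∃ l : Dual k V, l ≠ 0 ∧ L ≤ ker l ∧ ∀ v ∈ T, l v ≠ 0 := by
  classical
  obtain ⟨v₀, -, hv₀⟩ := SetLike.exists_of_lt hL.lt_top
  have hT' : ∀ v ∈ insert v₀ T, v ∉ L := by simpa [hv₀] using hT
  obtain ⟨l, hl, hne⟩ := Module.Dual.exists_forall_mem_ne_zero_of_forall_exists L.dualAnnihilator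
    (fun v : ↥(insert v₀ T) => Module.Dual.eval k V v.1) fun v => by
      obtain ⟨l, hlv, hlL⟩ := Submodule.exists_dual_map_eq_bot_of_notMem (hT' v.1 v.2) inferInstance
      exact ⟨l, (Submodule.mem_dualAnnihilator l).2 fun w hw =>
        (Submodule.mem_bot k).1 (hlL ▸ Submodule.mem_map_of_mem hw), by simpa using hlv⟩
  refine ⟨l, ?_, fun w hw => (Submodule.mem_dualAnnihilator l).1 hl w hw,
    fun v hv => hne ⟨v, mem_insert_of_mem hv⟩⟩
  rintro rfl
  exact hne ⟨v₀, mem_insert_self _ _⟩ rfl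

lemma exists_dual_degIn_ker_eq_forall_ne_zero [Infinite k] (p : ι → Fin n → k) (Z : ι → Jet k n)
    (hL : finrank k L < n) (T : Finset (Fin n → k)) (hT : ∀ v ∈ T, v ∉ L) :
    ∃ l : Dual k (Fin n → k), l ≠ 0 ∧ L ≤ ker l ∧ degIn (ker l) p Z = degIn L p Z ∧
      ∀ v ∈ T, l v ≠ 0 := by
  classical
  obtain ⟨l, hl, hLl, hne⟩ := exists_dual_le_ker_forall_ne_zero (ne_top_of_finrank_lt hL)
    ({v ∈ univ.image p ∪ univ.image fun i => (Z i).dir | v ∉ L} ∪ T)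
    (by simp only [mem_union, mem_filter]; grind)
  have hmem (v) (hv : v ∈ univ.image p ∪ univ.image fun i => (Z i).dir) : v ∈ ker l ↔ v ∈ L :=
    ⟨fun h => by_contra fun h' => hne v (mem_union_left _ (mem_filter.2 ⟨hv, h'⟩)) h,
      fun h => hLl h⟩
  exact ⟨l, hl, hLl, sum_congr rfl fun i _ =>
    Jet.degIn_congr (hmem _ (by simp)) (hmem _ (by simp)),
    fun v hv => hne v (mem_union_right _ hv)⟩

lemma exists_dual_degIn_ker_eq [Infinite k] (p : ι → Fin n → k) (Z : ι → Jet k n)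
    (hL : finrank k L < n) :
    ∃ l : Dual k (Fin n → k), l ≠ 0 ∧ L ≤ ker l ∧ degIn (ker l) p Z = degIn L p Z := by
  obtain ⟨l, hl, hLl, hdeg, -⟩ := exists_dual_degIn_ker_eq_forall_ne_zero p Z hL ∅ (by simp)
  exact ⟨l, hl, hLl, hdeg⟩

lemma exists_le_sum_eq (g : ι → ℕ) (m : ℕ) (h : m ≤ ∑ i, g i) :
    ∃ f : ι → ℕ, (∀ i, f i ≤ g i) ∧ ∑ i, f i = m := by
  classical
  induction m with
  | zero => exact ⟨0, fun i => Nat.zero_le _, by simp⟩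
  | succ m ih =>
    obtain ⟨f, hf, hs⟩ := ih (by omega)
    obtain ⟨i, -, hi⟩ : ∃ i ∈ univ, f i < g i := exists_lt_of_sum_lt (by omega)
    refine ⟨f + Pi.single i 1, fun j => ?_, by simp [sum_add_distrib, hs]⟩
    rcases eq_or_ne j i with rfl | hj
    · simpa using hi
    · simpa [hj] using hf j

lemma exists_submodule_forall_le_degIn (p : ι → Fin n → k) (f : ι → ℕ)
    (hf : ∀ i, f i ≤ (Z i).deg) :
    ∃ U : Submodule k (Fin n → k), finrank k U ≤ ∑ i, f i ∧
      ∀ i, f i ≤ (Z i).degIn U (p i) := by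
  let v (x : Σ i, Fin (f i)) : Fin n → k := if x.2.1 = 0 then p x.1 else (Z x.1).dir
  refine ⟨span k (Set.range v), (finrank_range_le_card v).trans (by simp), fun i => ?_⟩
  exact Jet.le_degIn_of_mem (hf i)
    (fun h => Submodule.subset_span ⟨⟨i, ⟨0, h⟩⟩, by simp [v]⟩)
    (fun h => Submodule.subset_span ⟨⟨i, ⟨1, h⟩⟩, by simp [v]⟩)

lemma exists_submodule_le_degIn (p : ι → Fin n → k) {m : ℕ} (hm : m ≤ deg Z) :
    ∃ U : Submodule k (Fin n → k), finrank k U ≤ m ∧ m ≤ degIn U p Z := by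
  obtain ⟨f, hf, rfl⟩ := exists_le_sum_eq _ m hm
  obtain ⟨U, hU, hfU⟩ := exists_submodule_forall_le_degIn p f hf
  exact ⟨U, hU, sum_le_sum fun i _ => hfU i⟩

lemma exists_ne_zero_forall_deg_residual_add_le (p : ι → Fin n → k) (f : ι → ℕ)
    (hf : ∀ i, f i ≤ (Z i).deg) (W : Submodule k (MvPolynomial (Fin n) k))
    [FiniteDimensional k W] (hW : ∑ i, f i < finrank k W) :
    ∃ G ∈ W, G ≠ 0 ∧ ∀ i, ((Z i).residual G (p i)).deg + f i ≤ (Z i).deg := by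
  let contact (x : Σ i, Fin (f i)) : Dual k (MvPolynomial (Fin n) k) :=
    if x.2.1 = 0 then evalLM k (p x.1) else dirDeriv (p x.1) (Z x.1).dir
  let φ : W →ₗ[k] ((Σ i, Fin (f i)) → k) := LinearMap.pi fun x => (contact x).comp W.subtype
  obtain ⟨G, hG, hG0⟩ := Submodule.exists_mem_ne_zero_of_ne_bot
    (LinearMap.ker_ne_bot_of_finrank_lt (f := φ) (by simpa using hW))
  have hcontact (x) : contact x G = 0 := congrFun hG x
  refine ⟨G.1, G.2, by simpa using hG0, fun i => Jet.deg_residual_add_le (hf i) ?_ ?_⟩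
  · exact fun h => by simpa [contact, evalLM, aeval_eq_eval] using hcontact ⟨i, ⟨0, h⟩⟩
  · exact fun h => by simpa [contact] using hcontact ⟨i, ⟨1, h⟩⟩

lemma exists_dual_degIn_ker_maximal (p : ι → Fin n → k) (Z : ι → Jet k n)
    {P : Dual k (Fin n → k) → Prop} (hP : ∃ l, P l) :
    ∃ l, P l ∧ ∀ l', P l' → degIn (ker l') p Z ≤ degIn (ker l) p Z := by
  let s := {m | ∃ l, P l ∧ degIn (ker l) p Z = m}
  have hbdd : BddAbove s := ⟨deg Z, by rintro _ ⟨l, -, rfl⟩; exact degIn_le_deg _ p Z⟩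
  obtain ⟨l, hl, hs⟩ := Nat.sSup_mem (s := s) (let ⟨l, hl⟩ := hP; ⟨_, l, hl, rfl⟩) hbdd
  exact ⟨l, hl, fun l' hl' => hs ▸ le_csSup hbdd ⟨l', hl', rfl⟩⟩

lemma exists_dual_degIn_lt_degIn_ker [Infinite k] (hL : finrank k L + 1 < n)
    (hlt : degIn L p Z < deg Z) :
    ∃ l : Dual k (Fin n → k), l ≠ 0 ∧ L ≤ ker l ∧ degIn L p Z < degIn (ker l) p Z := by
  obtain ⟨i, -, hi⟩ : ∃ i ∈ univ, (Z i).degIn L (p i) < (Z i).deg := exists_lt_of_sum_lt hlt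
  obtain ⟨v, hv⟩ : ∃ v, (Z i).degIn L (p i) < (Z i).degIn (L ⊔ span k {v}) (p i) := by
    have hmem (v) : v ∈ L ⊔ span k {v} := Submodule.mem_sup_right (mem_span_singleton_self v)
    by_cases hp : p i ∈ L
    · have hp' : p i ∈ L ⊔ span k {(Z i).dir} := Submodule.mem_sup_left hp
      exact ⟨(Z i).dir, hi.trans_le (Jet.le_degIn_of_mem le_rfl (fun _ => hp') fun _ => hmem _)⟩
    · rw [Jet.degIn_of_notMem hp] at hi ⊢
      exact ⟨p i, Jet.le_degIn_of_mem hi (fun _ => hmem _) (by omega)⟩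
  have hfin : finrank k ↥(L ⊔ span k {v}) < n := by
    have := Submodule.finrank_add_le_finrank_add_finrank L (span k {v})
    have : finrank k (span k {v}) ≤ 1 := by
      simpa using finrank_span_le_card (R := k) ({v} : Set (Fin n → k))
    omega
  obtain ⟨l, hl, hLl, hdeg⟩ := exists_dual_degIn_ker_eq p Z hfin
  exact ⟨l, hl, le_sup_left.trans hLl, hdeg ▸ sum_lt_sum
    (fun j _ => Jet.degIn_mono le_sup_left _ _) ⟨i, mem_univ i, hv⟩⟩

/-! ### Relations of small degree -/

lemma deg_ne_one_of_isRelation_zero (hr : IsRelation 0 p Z) : deg Z ≠ 1 := fun h => by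
  classical
  obtain ⟨i, hi⟩ := exists_deg_pos (h ▸ one_pos)
  have hsplit := add_sum_erase univ (fun j => (Z j).deg) (mem_univ i)
  rw [show ∑ j, (Z j).deg = 1 from h] at hsplit
  have hothers (j) (hj : j ≠ i) : (Z j).deg = 0 :=
    sum_eq_zero_iff.1 (show ∑ j ∈ univ.erase i, (Z j).deg = 0 by omega) j (by simp [hj])
  have hrel := hr 1 (isHomogeneous_one _ _)
  rw [sum_eq_single i (fun j _ hj => by simp [Jet.functional_of_deg_eq_zero (hothers j hj)])
    (by simp)] at hrel
  have hdir : (Z i).dir = 0 := Jet.deg_le_one_iff.1 (by omega)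
  have hcoeff : (Z i).coeff = 0 := by simpa [Jet.functional_apply, hdir] using hrel
  exact hi.ne' (Jet.deg_eq_zero_iff.2 ⟨hcoeff, hdir⟩)

lemma IsAdmissible.degIn_bot (hv : IsAdmissible p Z) : degIn ⊥ p Z = 0 :=
  sum_eq_zero fun i _ => Jet.degIn_of_notMem (by simpa using hv.ne_zero i)

lemma IsAdmissible.degIn_span_singleton (hv : IsAdmissible p Z) {i : ι} (hi : 0 < (Z i).deg) :
    degIn (span k {p i}) p Z = 1 := by
  unfold degIn
  rw [sum_eq_single i _ (by simp)]
  · have htangent := hv.dir_notMem_span i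
    simp only [Jet.degIn, mem_span_singleton_self, if_true]
    grind [Jet.deg]
  · exact fun j _ hj => Jet.degIn_of_notMem (hv.notMem_span i j hj.symm)

lemma add_two_le_deg_of_isRelation [Infinite k] (hn : 2 ≤ n) (hv : IsAdmissible p Z)
    (hr : IsRelation e p Z) (hZ : 0 < deg Z) : e + 2 ≤ deg Z := by
  induction e generalizing Z with
  | zero =>
    have := deg_ne_one_of_isRelation_zero hr
    omega
  | succ e ih =>
    obtain ⟨l, -, -, hl⟩ := exists_dual_degIn_ker_eq (L := ⊥) p Z (by simp; omega)
    have hres := deg_residual_linForm_add_degIn p Z l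
    have hbot := hv.degIn_bot
    have hlow := ih (hv.residual _) (hr.residual (isHomogeneous_linForm l)) (by omega)
    obtain ⟨i, hi⟩ := exists_deg_pos hZ
    obtain ⟨l', -, -, hl'⟩ := exists_dual_degIn_ker_eq (L := span k {p i}) p Z
      (by rw [finrank_span_singleton (hv.ne_zero i)]; omega)
    have hres' := deg_residual_linForm_add_degIn p Z l'
    have hpoint := hv.degIn_span_singleton hi
    have hlow' := ih (hv.residual _) (hr.residual (isHomogeneous_linForm l')) (by omega)
    omega

lemma deg_residual_eq_zero_of_residual_linForm [Infinite k] (hn : 2 ≤ n) (hv : IsAdmissible p Z)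
    {m : ℕ} (hr : IsRelation (e + m) p Z) {G : MvPolynomial (Fin n) k} (hG : G.IsHomogeneous m)
    {l : Dual k (Fin n → k)} (hGl : deg (residual G p (residual (linForm l) p Z)) = 0)
    (hl : degIn (ker l) p Z ≤ e + 1) : deg (residual G p Z) = 0 := by
  by_contra hne
  have hge := add_two_le_deg_of_isRelation hn (hv.residual G) (hr.residual hG)
    (Nat.pos_of_ne_zero hne)
  have hadd := deg_residual_add_deg_residual_le hGl
  have hsplit := deg_residual_linForm_add_degIn p Z l
  omega

-- Among the hyperplanes not containing `Z`, one of maximal contact leaves by induction a residual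
-- scheme on a line, and a hyperplane through that line would have larger contact.
lemma exists_line_of_isRelation [Infinite k] (hn : 3 ≤ n) (hv : IsAdmissible p Z)
    (hr : IsRelation e p Z) (hZ : deg Z ≤ 2 * e + 1) :
    ∃ L : Submodule k (Fin n → k), finrank k L ≤ 2 ∧ degIn L p Z = deg Z := by
  induction e generalizing Z with
  | zero =>
    refine ⟨⊥, by simp, ?_⟩
    have := deg_ne_one_of_isRelation_zero hr
    have := degIn_le_deg ⊥ p Z
    omega
  | succ e ih =>
    by_contra! hne
    have hlt (L : Submodule k (Fin n → k)) (hL : finrank k L ≤ 2) : degIn L p Z < deg Z :=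
      (degIn_le_deg L p Z).lt_of_ne (hne L hL)
    have hpos : 0 < deg Z := (Nat.zero_le _).trans_lt (hlt ⊥ (by simp))
    have hlow := add_two_le_deg_of_isRelation (by omega) hv hr hpos
    obtain ⟨U, hU, hU2⟩ := exists_submodule_le_degIn p (show 2 ≤ deg Z by omega)
    obtain ⟨l₀, -, -, hl₀⟩ := exists_dual_degIn_ker_eq p Z (show finrank k U < n by omega)
    have hUlt := hlt U hU
    obtain ⟨l, hlZ, hmax⟩ := exists_dual_degIn_ker_maximal p Z
      (P := fun l => degIn (ker l) p Z < deg Z) ⟨l₀, by omega⟩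
    have hl₀max := hmax l₀ (by omega)
    have hres := deg_residual_linForm_add_degIn p Z l
    have hv' := hv.residual (linForm l)
    have hr' := hr.residual (isHomogeneous_linForm l)
    obtain ⟨L, hL, hLres⟩ := ih hv' hr' (by omega)
    have hlow' := add_two_le_deg_of_isRelation (by omega) hv' hr' (by omega)
    have hLle := degIn_residual_le L p Z (linForm l)
    obtain ⟨l₁, -, -, hl₁⟩ := exists_dual_degIn_ker_eq p Z (show finrank k L < n by omega)
    have hLlt := hlt L hL
    have hl₁max := hmax l₁ (by omega)
    omega

/-- The scheme carrying a family of jets lies in no hyperplane. -/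
def IsNonplanar (p : ι → Fin n → k) (Z : ι → Jet k n) : Prop :=
  ∀ l : Dual k (Fin n → k), l ≠ 0 → degIn (ker l) p Z < deg Z

/-- The hyperplane `l = 0` has maximal contact with the scheme carrying a family of jets. -/
structure IsMaxHyperplane (l : Dual k (Fin n → k)) (p : ι → Fin n → k) (Z : ι → Jet k n) :
    Prop where
  ne_zero : l ≠ 0
  degIn_le : ∀ l' : Dual k (Fin n → k), l' ≠ 0 → degIn (ker l') p Z ≤ degIn (ker l) p Z

lemma exists_isMaxHyperplane (hn : 0 < n) (p : ι → Fin n → k) (Z : ι → Jet k n) :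
    ∃ l, IsMaxHyperplane l p Z := by
  have : NeZero n := ⟨hn.ne'⟩
  obtain ⟨l, hl, hmax⟩ := exists_dual_degIn_ker_maximal p Z (P := (· ≠ 0)) (exists_ne 0)
  exact ⟨l, hl, hmax⟩

lemma exists_degIn_ker_eq_deg_of_not_isNonplanar (h : ¬ IsNonplanar p Z) :
    ∃ l : Dual k (Fin n → k), l ≠ 0 ∧ degIn (ker l) p Z = deg Z := by
  simp only [IsNonplanar, not_forall, not_lt] at h
  obtain ⟨l, hl, h⟩ := h
  exact ⟨l, hl, (degIn_le_deg _ p Z).antisymm h⟩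

lemma IsNonplanar.degIn_lt_deg [Infinite k] (h : IsNonplanar p Z) (hL : finrank k L < n) :
    degIn L p Z < deg Z := by
  obtain ⟨l, hl, -, hdeg⟩ := exists_dual_degIn_ker_eq p Z hL
  exact hdeg ▸ h l hl

lemma IsNonplanar.le_deg [Infinite k] (h : IsNonplanar p Z) : n ≤ deg Z := by
  by_contra! hlt
  obtain ⟨U, hU, hdeg⟩ := exists_submodule_le_degIn p le_rfl
  exact (h.degIn_lt_deg (hU.trans_lt hlt)).not_ge hdeg

variable {l : Dual k (Fin n → k)}

lemma IsMaxHyperplane.degIn_submodule_le [Infinite k] (hl : IsMaxHyperplane l p Z)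
    (hL : finrank k L < n) : degIn L p Z ≤ degIn (ker l) p Z := by
  obtain ⟨l', hl', -, hdeg⟩ := exists_dual_degIn_ker_eq p Z hL
  exact hdeg ▸ hl.degIn_le l' hl'

lemma IsMaxHyperplane.degIn_submodule_lt [Infinite k] (hl : IsMaxHyperplane l p Z)
    (hZ : IsNonplanar p Z) (hL : finrank k L + 1 < n) : degIn L p Z < degIn (ker l) p Z := by
  obtain ⟨l', hl', -, hlt⟩ := exists_dual_degIn_lt_degIn_ker hL (hZ.degIn_lt_deg (by omega))
  exact hlt.trans_le (hl.degIn_le l' hl')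

lemma IsMaxHyperplane.le_degIn_add_one [Infinite k] (hl : IsMaxHyperplane l p Z)
    (hZ : IsNonplanar p Z) (hn : 0 < n) : n ≤ degIn (ker l) p Z + 1 := by
  obtain ⟨U, hU, hdeg⟩ :=
    exists_submodule_le_degIn p (show n - 1 ≤ deg Z by have := hZ.le_deg; omega)
  have := hl.degIn_submodule_le (L := U) (by omega)
  omega

end Contact

section Space

variable {k : Type*} [Field k] [Infinite k] {ι : Type*} [Fintype ι] {p : ι → Fin 4 → k}
  {Z : ι → Jet k 4} {l : Dual k (Fin 4 → k)} {e : ℕ}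

lemma IsMaxHyperplane.degIn_bounds_of_line (hl : IsMaxHyperplane l p Z) (hv : IsAdmissible p Z)
    (hr : IsRelation (e + 1) p Z) (hZ : IsNonplanar p Z) {L : Submodule k (Fin 4 → k)}
    (hL : finrank k L ≤ 2)
    (hLres : degIn L p (residual (linForm l) p Z) = deg (residual (linForm l) p Z)) :
    e + 3 ≤ degIn (ker l) p Z ∧ degIn (ker l) p Z + (e + 2) ≤ deg Z := by
  have hlt := hZ l hl.ne_zero
  have hres := deg_residual_linForm_add_degIn p Z l
  have hlow := add_two_le_deg_of_isRelation (by norm_num) (hv.residual _)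
    (hr.residual (isHomogeneous_linForm l)) (by omega)
  have hLle := degIn_residual_le L p Z (linForm l)
  have hLlt := hl.degIn_submodule_lt hZ (L := L) (by omega)
  omega

lemma IsMaxHyperplane.exists_line_of_residual (hl : IsMaxHyperplane l p Z)
    (hv : IsAdmissible p Z) (hr : IsRelation (e + 1) p Z) (hZ : IsNonplanar p Z)
    (hdeg : deg Z ≤ 3 * (e + 1) + 1) :
    ∃ L : Submodule k (Fin 4 → k), finrank k L ≤ 2 ∧
      degIn L p (residual (linForm l) p Z) = deg (residual (linForm l) p Z) := by
  induction e generalizing Z l with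
  | zero =>
    have := deg_residual_linForm_add_degIn p Z l
    have := hl.le_degIn_add_one hZ (by norm_num)
    exact exists_line_of_isRelation (by norm_num) (hv.residual _)
      (hr.residual (isHomogeneous_linForm l)) (by omega)
  | succ e ih =>
    have hres := deg_residual_linForm_add_degIn p Z l
    have hv' := hv.residual (linForm l)
    have hr' := hr.residual (isHomogeneous_linForm l)
    have hthree := hl.le_degIn_add_one hZ (by norm_num)
    by_cases hplanar : IsNonplanar p (residual (linForm l) p Z)
    · obtain ⟨l', hl'⟩ := exists_isMaxHyperplane (by norm_num) p (residual (linForm l) p Z)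
      obtain ⟨L, hL, hLres⟩ := ih hl' hv' hr' hplanar (by omega)
      have hbounds := hl'.degIn_bounds_of_line hv' hr' hplanar hL hLres
      have := degIn_residual_le (ker l') p Z (linForm l)
      have := hl.degIn_le l' hl'.ne_zero
      omega
    · obtain ⟨l', hl', hdeg'⟩ := exists_degIn_ker_eq_deg_of_not_isNonplanar hplanar
      have := degIn_residual_le (ker l') p Z (linForm l)
      have := hl.degIn_le l' hl'
      exact exists_line_of_isRelation (by norm_num) hv' hr' (by omega)

lemma IsMaxHyperplane.degIn_bounds (hl : IsMaxHyperplane l p Z) (hv : IsAdmissible p Z)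
    (hr : IsRelation e p Z) (hZ : IsNonplanar p Z) (hdeg : deg Z ≤ 3 * e + 1) :
    e + 2 ≤ degIn (ker l) p Z ∧ degIn (ker l) p Z + (e + 1) ≤ deg Z := by
  cases e with
  | zero =>
    have := hZ.le_deg
    omega
  | succ e =>
    obtain ⟨L, hL, hLres⟩ := hl.exists_line_of_residual hv hr hZ hdeg
    exact hl.degIn_bounds_of_line hv hr hZ hL hLres

lemma IsMaxHyperplane.add_three_le_degIn (hl : IsMaxHyperplane l p Z) (hv : IsAdmissible p Z)
    (hr : IsRelation e p Z) (hZ : IsNonplanar p Z) (he : 3 ≤ e) (hdeg : deg Z ≤ 3 * e + 1) :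
    e + 3 ≤ degIn (ker l) p Z := by
  obtain ⟨e, rfl⟩ : ∃ e', e = e' + 1 := ⟨e - 1, by omega⟩
  by_contra hlt
  have hbounds := hl.degIn_bounds hv hr hZ hdeg
  obtain ⟨L, hL, hLres⟩ := hl.exists_line_of_residual hv hr hZ hdeg
  have hres := deg_residual_linForm_add_degIn p Z l
  have hLle := degIn_residual_le L p Z (linForm l)
  have hLlt := hl.degIn_submodule_lt hZ (L := L) (by omega)
  obtain ⟨l', -, -, hl'⟩ := exists_dual_degIn_ker_eq p Z (show finrank k L < 4 by omega)
  have hres' := deg_residual_linForm_add_degIn p Z l'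
  obtain ⟨L', hL', hL'res⟩ := exists_line_of_isRelation (by norm_num) (hv.residual _)
    (hr.residual (isHomogeneous_linForm l')) (by omega)
  have hL'le := degIn_residual_le L' p Z (linForm l')
  have hL'lt := hl.degIn_submodule_lt hZ (L := L') (by omega)
  omega

lemma three_mul_add_two_le_deg (hv : IsAdmissible p Z) (hr : IsRelation e p Z) (hZ : 0 < deg Z)
    (he : 2 ≤ e) (hplane : ∀ l : Dual k (Fin 4 → k), l ≠ 0 → degIn (ker l) p Z ≤ 3) :
    3 * e + 2 ≤ deg Z := by
  have hlow := add_two_le_deg_of_isRelation (by norm_num) hv hr hZ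
  have hnonplanar : IsNonplanar p Z := fun l hl => by
    have := hplane l hl
    omega
  by_contra hlt
  obtain ⟨l, hl⟩ := exists_isMaxHyperplane (by norm_num) p Z
  have := hl.degIn_bounds hv hr hnonplanar (by omega)
  have := hplane l hl.ne_zero
  omega

end Space

/-! ### Multiples of a form -/

section Multiples

variable {k : Type*} [Field k] {n : ℕ}

lemma finrank_homogeneousSubmodule (m d : ℕ) :
    finrank k (homogeneousSubmodule (Fin (m + 1)) k d) = (m + d).choose m := by
  let A := (univ : Finset (Fin (m + 1))).finsuppAntidiag d
  have hset : {x : Fin (m + 1) →₀ ℕ | x.degree = d} = A := by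
    ext x
    simp [A, mem_finsuppAntidiag, Finsupp.degree_eq_sum]
  have equiv : homogeneousSubmodule (Fin (m + 1)) k d ≃ₗ[k]
      ((A : Set (Fin (m + 1) →₀ ℕ)) →₀ k) := by
    rw [homogeneousSubmodule_eq_finsupp_supported, hset]
    exact AddMonoidAlgebra.supportedEquivFinsupp _
  rw [equiv.finrank_eq, Module.finrank_finsupp_self]
  simp only [A, coe_sort_coe, Fintype.card_coe, card_finsuppAntidiag_nat_eq_choose, card_univ,
    Fintype.card_fin]
  rw [show m + 1 + d - 1 = m + d by omega, Nat.choose_symm_add]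

instance (m d : ℕ) : FiniteDimensional k (homogeneousSubmodule (Fin m) k d) :=
  Module.Finite.iff_fg.2 (homogeneousSubmodule_fg _ _ _)

lemma linForm_ne_zero {l : Dual k (Fin n → k)} (hl : l ≠ 0) : linForm l ≠ 0 := fun h =>
  hl (LinearMap.ext fun v => by simpa using congrArg (eval v) h)

lemma prime_linForm {l : Dual k (Fin n → k)} (hl : l ≠ 0) : Prime (linForm l) := by
  refine (irreducible_of_totalDegree_eq_one
    ((isHomogeneous_linForm l).totalDegree (linForm_ne_zero hl)) fun x hx => ?_).prime
  rw [isUnit_iff_ne_zero]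
  rintro rfl
  exact linForm_ne_zero hl (by ext i; simpa using hx i)

lemma mem_span_singleton_of_linForm_dvd {l h : Dual k (Fin n → k)} (hdvd : linForm l ∣ linForm h) :
    h ∈ span k {l} := by
  obtain ⟨G, hG⟩ := hdvd
  have hker : ⨅ _ : Unit, ker l ≤ ker h := by
    rw [iInf_const]
    intro v hv
    simpa [LinearMap.mem_ker.1 hv] using congrArg (eval v) hG
  simpa using mem_span_of_iInf_ker_le_ker hker

lemma not_linForm_dvd_mul {μ l h : Dual k (Fin n → k)} (hμ : μ ≠ 0) (hl : l ∉ span k {μ})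
    (hh : h ∉ span k {μ}) : ¬ linForm μ ∣ linForm l * linForm h := fun hdvd =>
  ((prime_linForm hμ).dvd_or_dvd hdvd).elim (hl ∘ mem_span_singleton_of_linForm_dvd)
    (hh ∘ mem_span_singleton_of_linForm_dvd)

lemma isHomogeneous_right_of_mul {F G : MvPolynomial (Fin n) k} {m e : ℕ}
    (hF : F.IsHomogeneous m) (hF0 : F ≠ 0) (hFG : (F * G).IsHomogeneous (m + e)) :
    G.IsHomogeneous e := by
  have hterm (i : ℕ) : homogeneousComponent (m + e) (F * homogeneousComponent i G) =
      if i = e then F * homogeneousComponent i G else 0 := by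
    rw [homogeneousComponent_of_mem (n := m + i) (hF.mul (homogeneousComponent_isHomogeneous i G))]
    simp [eq_comm]
  have hcomponent : F * homogeneousComponent e G = F * G := by
    conv_rhs => rw [← homogeneousComponent_eq_self hFG, ← sum_homogeneousComponent G]
    simp only [mul_sum, map_sum, hterm, sum_ite_eq']
    split_ifs with he
    · rfl
    · rw [homogeneousComponent_eq_zero _ _ (by simpa using he), mul_zero]
  exact mul_left_cancel₀ hF0 hcomponent ▸ homogeneousComponent_isHomogeneous e G

/-- The multiples of `G` by forms of degree `e`: the degree `m + e` part of the ideal generated by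
`G` if `G` is a form of degree `m`. -/
def multiples (G : MvPolynomial (Fin n) k) (e : ℕ) : Submodule k (MvPolynomial (Fin n) k) :=
  (homogeneousSubmodule (Fin n) k e).map (LinearMap.mulLeft k G)

variable {G : MvPolynomial (Fin n) k}

lemma mem_multiples {F : MvPolynomial (Fin n) k} {e : ℕ} :
    F ∈ multiples G e ↔ ∃ H : MvPolynomial (Fin n) k, H.IsHomogeneous e ∧ G * H = F := by
  simp [multiples, Submodule.mem_map]

lemma finrank_multiples (hG : G ≠ 0) (e : ℕ) :
    finrank k (multiples G e) = finrank k (homogeneousSubmodule (Fin n) k e) :=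
  (Submodule.equivMapOfInjective _ (fun _ _ h => mul_left_cancel₀ hG h) _).finrank_eq.symm

instance (G : MvPolynomial (Fin n) k) (e : ℕ) : FiniteDimensional k (multiples G e) := by
  unfold multiples
  infer_instance

lemma multiples_le_homogeneousSubmodule {m : ℕ} (hG : G.IsHomogeneous m) (e : ℕ) :
    multiples G e ≤ homogeneousSubmodule (Fin n) k (m + e) := by
  intro F hF
  obtain ⟨H, hH, rfl⟩ := mem_multiples.1 hF
  exact hG.mul hH

lemma mem_multiples_linForm_of_dvd {l : Dual k (Fin n → k)} {F : MvPolynomial (Fin n) k} {e : ℕ}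
    (hl : l ≠ 0) (hF : F.IsHomogeneous (1 + e)) (hdvd : linForm l ∣ F) :
    F ∈ multiples (linForm l) e := by
  obtain ⟨H, rfl⟩ := hdvd
  exact mem_multiples.2
    ⟨H, isHomogeneous_right_of_mul (isHomogeneous_linForm l) (linForm_ne_zero hl) hF, rfl⟩

lemma exists_submodule_forall_not_linForm_dvd {l : Dual k (Fin n → k)} (hl : l ≠ 0) (e : ℕ) :
    ∃ W ≤ homogeneousSubmodule (Fin n) k (1 + e),
      finrank k (homogeneousSubmodule (Fin n) k (1 + e)) ≤
        finrank k (homogeneousSubmodule (Fin n) k e) + finrank k W ∧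
      ∀ G ∈ W, G ≠ 0 → ¬ linForm l ∣ G := by
  set V := homogeneousSubmodule (Fin n) k (1 + e)
  obtain ⟨W, hW⟩ := Submodule.exists_isCompl (multiples (linForm l) e)
  have hle : multiples (linForm l) e ≤ V :=
    multiples_le_homogeneousSubmodule (isHomogeneous_linForm l) e
  refine ⟨W ⊓ V, inf_le_right, ?_, fun G hG hG0 hdvd => hG0 ?_⟩
  · have hsup : multiples (linForm l) e ⊔ W ⊓ V = V := by
      rw [← sup_inf_assoc_of_le _ hle, hW.sup_eq_top, top_inf_eq]
    have := Submodule.finiteDimensional_inf_right W V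
    have hadd := Submodule.finrank_add_le_finrank_add_finrank (multiples (linForm l) e) (W ⊓ V)
    rwa [hsup, finrank_multiples (linForm_ne_zero hl)] at hadd
  · exact Submodule.disjoint_def.1 hW.disjoint G
      (mem_multiples_linForm_of_dvd hl hG.2 hdvd) hG.1

end Multiples

/-! ### Relations carried by a conic -/

section Conic

variable {k : Type*} [Field k] {ι : Type*} [Fintype ι] {p : ι → Fin 4 → k}
  {Z : ι → Jet k 4} {e : ℕ}

lemma exists_quadric_deg_residual_add_five_le {μ : Dual k (Fin 4 → k)} (hμ : μ ≠ 0)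
    (p : ι → Fin 4 → k) (hdeg : 5 ≤ deg Z) :
    ∃ q : MvPolynomial (Fin 4) k, q.IsHomogeneous 2 ∧ ¬ linForm μ ∣ q ∧
      deg (residual q p Z) + 5 ≤ deg Z := by
  obtain ⟨W, hW, hrank, hdvd⟩ := exists_submodule_forall_not_linForm_dvd hμ 1
  have := Submodule.finiteDimensional_of_le hW
  obtain ⟨f, hf, hsum⟩ := exists_le_sum_eq _ 5 hdeg
  obtain ⟨q, hqW, hq0, hq⟩ := exists_ne_zero_forall_deg_residual_add_le p f hf W (by
    rw [finrank_homogeneousSubmodule, finrank_homogeneousSubmodule] at hrank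
    norm_num [Nat.choose] at hrank
    omega)
  refine ⟨q, hW hqW, hdvd q hqW hq0, ?_⟩
  rw [← hsum, deg, ← sum_add_distrib]
  exact sum_le_sum fun i _ => hq i

lemma exists_quadric_of_two_planes {μ l h : Dual k (Fin 4 → k)} (hμ : μ ≠ 0)
    (hl : l ∉ span k {μ}) (hh : h ∉ span k {μ})
    (hlh : deg (residual (linForm h) p (residual (linForm l) p Z)) = 0) :
    ∃ q : MvPolynomial (Fin 4) k,
      q.IsHomogeneous 2 ∧ ¬ linForm μ ∣ q ∧ deg (residual q p Z) = 0 :=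
  ⟨linForm h * linForm l, (isHomogeneous_linForm h).mul (isHomogeneous_linForm l),
    not_linForm_dvd_mul hμ hh hl, by rwa [← residual_residual]⟩

variable [Infinite k]

lemma exists_plane_through_line (p : ι → Fin 4 → k) (Z : ι → Jet k 4)
    {L : Submodule k (Fin 4 → k)} (hL : finrank k L ≤ 2) (μ : Dual k (Fin 4 → k)) :
    ∃ h ∉ span k {μ}, L ≤ ker h ∧ degIn (ker h) p Z = degIn L p Z := by
  obtain ⟨v, hvμ, hvL⟩ : ∃ v ∈ ker μ, v ∉ L := by
    by_contra! hle
    have hmono := Submodule.finrank_mono (show ker μ ≤ L from hle)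
    have hrank := LinearMap.finrank_range_add_finrank_ker μ
    have hrange := (LinearMap.range μ).finrank_le
    rw [Module.finrank_self] at hrange
    rw [Module.finrank_fin_fun] at hrank
    omega
  obtain ⟨h, -, hLh, hdeg, hv⟩ :=
    exists_dual_degIn_ker_eq_forall_ne_zero p Z (L := L) (by omega) {v} (by simpa using hvL)
  refine ⟨h, fun hμ => hv v (by simp) ?_, hLh, hdeg⟩
  obtain ⟨c, rfl⟩ := Submodule.mem_span_singleton.1 hμ
  simp [LinearMap.mem_ker.1 hvμ]

lemma exists_plane_deg_residual_eq_zero (hv : IsAdmissible p Z) (hr : IsRelation e p Z)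
    (hdeg : deg Z ≤ 2 * e + 1) (μ : Dual k (Fin 4 → k)) :
    ∃ h ∉ span k {μ}, deg (residual (linForm h) p Z) = 0 := by
  obtain ⟨L, hL, hLdeg⟩ := exists_line_of_isRelation (by norm_num) hv hr hdeg
  obtain ⟨h, hh, -, hhdeg⟩ := exists_plane_through_line p Z hL μ
  have := deg_residual_linForm_add_degIn p Z h
  exact ⟨h, hh, by omega⟩

lemma deg_residual_eq_zero_of_forall_degIn_le_two {μ : Dual k (Fin 4 → k)}
    (hv : IsAdmissible p Z) (hr : IsRelation (e + 2) p Z)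
    (hplane : ∀ h ∉ span k {μ}, degIn (ker h) p Z ≤ 2)
    {q : MvPolynomial (Fin 4) k} (hq : q.IsHomogeneous 2)
    (hdeg : deg (residual q p Z) ≤ 2 * e + 1) : deg (residual q p Z) = 0 := by
  by_contra hne
  have hrq := hr.residual hq
  have hlow := add_two_le_deg_of_isRelation (by norm_num) (hv.residual q) hrq (by omega)
  obtain ⟨L, hL, hLdeg⟩ := exists_line_of_isRelation (by norm_num) (hv.residual q) hrq hdeg
  obtain ⟨h, hh, -, hhdeg⟩ := exists_plane_through_line p Z hL μ
  have hle := degIn_residual_le L p Z q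
  have := hplane h hh
  omega

theorem exists_quadric_deg_residual_eq_zero {μ : Dual k (Fin 4 → k)} (hμ : μ ≠ 0)
    (hv : IsAdmissible p Z) (hr : IsRelation e p Z) (hdeg : 2 * deg Z ≤ 5 * e + 2) :
    ∃ q : MvPolynomial (Fin 4) k,
      q.IsHomogeneous 2 ∧ ¬ linForm μ ∣ q ∧ deg (residual q p Z) = 0 := by
  induction e using Nat.strong_induction_on generalizing Z with | _ e ih
  by_cases hline : deg Z ≤ 2 * e + 1
  · obtain ⟨h, hh, hh0⟩ := exists_plane_deg_residual_eq_zero hv hr hline μ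
    exact exists_quadric_of_two_planes hμ hh hh (Nat.le_zero.1 (hh0 ▸ deg_residual_le p _ _))
  obtain ⟨e, rfl⟩ : ∃ e', e = e' + 2 := ⟨e - 2, by omega⟩
  obtain ⟨h₀, hh₀, -⟩ := exists_plane_through_line p Z (L := ⊥) (by simp) μ
  obtain ⟨l, hl, hmax⟩ := exists_dual_degIn_ker_maximal p Z (P := (· ∉ span k {μ})) ⟨h₀, hh₀⟩
  have hres := deg_residual_linForm_add_degIn p Z l
  by_cases hcontact : 3 ≤ degIn (ker l) p Z
  · have hrl : IsRelation (e + 1) p (residual (linForm l) p Z) :=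
      IsRelation.residual (m := 1) hr (isHomogeneous_linForm l)
    by_cases hline' : deg (residual (linForm l) p Z) ≤ 2 * (e + 1) + 1
    · obtain ⟨h, hh, hh0⟩ := exists_plane_deg_residual_eq_zero (hv.residual _) hrl hline' μ
      exact exists_quadric_of_two_planes hμ hl hh hh0
    obtain ⟨q, hq, hqμ, hq0⟩ := ih (e + 1) (by omega) (hv.residual _) hrl (by omega)
    exact ⟨q, hq, hqμ,
      deg_residual_eq_zero_of_residual_linForm (by norm_num) hv hr hq hq0 (by omega)⟩
  · have vanish {q : MvPolynomial (Fin 4) k} (hq : q.IsHomogeneous 2)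
        (hqdeg : deg (residual q p Z) ≤ 2 * e + 1) : deg (residual q p Z) = 0 :=
      deg_residual_eq_zero_of_forall_degIn_le_two hv hr
        (fun h hh => (hmax h hh).trans (by omega)) hq hqdeg
    obtain ⟨q, hq, hqμ, hqdeg⟩ := exists_quadric_deg_residual_add_five_le hμ p (Z := Z) (by omega)
    by_cases hline' : deg (residual q p Z) ≤ 2 * e + 1
    · exact ⟨q, hq, hqμ, vanish hq hline'⟩
    obtain ⟨q', hq', hqμ', hq0⟩ := ih e (by omega) (hv.residual q) (hr.residual hq) (by omega)
    have hadd := deg_residual_add_deg_residual_le hq0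
    exact ⟨q', hq', hqμ', vanish hq' (by omega)⟩

end Conic

/-! ### Dependent tangent vectors at many points of a plane curve -/

section PlaneCurve

variable {k : Type*} [Field k]

lemma exists_ne_zero_forall_dotProduct_eq_zero {V κ : Type*} [AddCommGroup V] [Module k V]
    [FiniteDimensional k V] [Fintype κ] (φ : V →ₗ[k] κ → k) {K : Submodule k V} (hK : K ≤ ker φ)
    (h : finrank k V < finrank k K + Fintype.card κ) :
    ∃ c : κ → k, c ≠ 0 ∧ ∀ v, ∑ i, c i * φ v i = 0 := by
  have hrange : LinearMap.range φ < ⊤ := by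
    refine lt_top_iff_ne_top.2 fun htop => ?_
    have hrank := LinearMap.finrank_range_add_finrank_ker φ
    have hmono := Submodule.finrank_mono hK
    rw [htop, finrank_top, Module.finrank_fintype_fun_eq_card] at hrank
    omega
  classical
  obtain ⟨f, hf, hle⟩ := Submodule.exists_le_ker_of_lt_top _ hrange
  refine ⟨fun i => f (Pi.single i 1), fun h0 => hf ?_, fun v => ?_⟩
  · ext i
    simpa using congrFun h0 i
  · exact (sum_dual_single_mul f (φ v)).trans (hle ⟨v, rfl⟩)

lemma exists_tangent_notMem_span (μ ν : Dual k (Fin 4 → k)) (p : Fin 4 → k) :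
    ∃ w, μ w = 0 ∧ ν w = 0 ∧ w ∉ span k {p} := by
  by_contra! hspan
  have hle : ker (μ.prod ν) ≤ span k {p} := fun w hw => by
    obtain ⟨hμ, hν⟩ := Prod.ext_iff.1 (LinearMap.mem_ker.1 hw)
    exact hspan w hμ hν
  have hmono := Submodule.finrank_mono hle
  have hrank := LinearMap.finrank_range_add_finrank_ker (μ.prod ν)
  have hrange := (LinearMap.range (μ.prod ν)).finrank_le
  have hspan_le : finrank k (span k {p}) ≤ 1 := by
    simpa using finrank_span_le_card (R := k) ({p} : Set (Fin 4 → k))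
  rw [Module.finrank_prod, Module.finrank_self] at hrange
  rw [Module.finrank_fin_fun] at hrank
  omega

variable {μ : Dual k (Fin 4 → k)} {q : MvPolynomial (Fin 4) k} {m : ℕ}

lemma multiples_linForm_inf_multiples_le {n : ℕ} {μ : Dual k (Fin n → k)}
    {q : MvPolynomial (Fin n) k} (hμ : μ ≠ 0) (hdvd : ¬ linForm μ ∣ q) (e : ℕ) :
    multiples (linForm μ) (m + e) ⊓ multiples q (e + 1) ≤ multiples (linForm μ * q) e := by
  rintro _ ⟨hμF, hqF⟩
  obtain ⟨a, -, rfl⟩ := mem_multiples.1 hμF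
  obtain ⟨b, hb, hab⟩ := mem_multiples.1 hqF
  have hμb : linForm μ ∣ b := ((prime_linForm hμ).dvd_or_dvd ⟨a, hab⟩).resolve_left hdvd
  obtain ⟨c, hc, rfl⟩ := mem_multiples.1
    (mem_multiples_linForm_of_dvd (e := e) hμ (by rwa [add_comm]) hμb)
  exact mem_multiples.2 ⟨c, hc, by rw [← hab]; ring⟩

lemma six_mul_choose_three (e : ℕ) : 6 * (3 + e).choose 3 = (e + 1) * (e + 2) * (e + 3) := by
  have h := Nat.ascFactorial_eq_factorial_mul_choose e 3
  simp only [Nat.ascFactorial, Nat.factorial] at h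
  rw [add_comm 3 e]
  linarith

-- The plane curve `μ = q = 0` of degree `m` has Hilbert function at most `m * d + 1`.
lemma finrank_homogeneousSubmodule_le_finrank_multiples_sup (hμ : μ ≠ 0) (hdvd : ¬ linForm μ ∣ q)
    (e : ℕ) :
    finrank k (homogeneousSubmodule (Fin 4) k (m + e + 1)) ≤
      finrank k ↥(multiples (linForm μ) (m + e) ⊔ multiples q (e + 1)) + m * (m + e + 1) + 1 := by
  have hq : q ≠ 0 := fun h => hdvd (h ▸ dvd_zero _)
  have hsup := Submodule.finrank_sup_add_finrank_inf_eq
    (multiples (linForm μ) (m + e)) (multiples q (e + 1))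
  have hinf := Submodule.finrank_mono (multiples_linForm_inf_multiples_le (m := m) hμ hdvd e)
  simp only [finrank_multiples, linForm_ne_zero hμ, hq, mul_ne_zero, ne_eq, not_false_eq_true,
    finrank_homogeneousSubmodule] at hsup hinf ⊢
  have h₁ := six_mul_choose_three (m + e + 1)
  have h₂ := six_mul_choose_three (m + e)
  have h₃ := six_mul_choose_three (e + 1)
  have h₄ := six_mul_choose_three e
  rcases m with - | - | m <;> nlinarith

/-- The values at the points `p i` and the derivatives along `w i`. -/
def valuesAndDerivatives {κ : Type*} {n : ℕ} (p w : κ → Fin n → k) :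
    MvPolynomial (Fin n) k →ₗ[k] κ ⊕ κ → k :=
  LinearMap.pi (Sum.elim (fun i => evalLM k (p i)) fun i => dirDeriv (p i) (w i))

@[simp]
lemma valuesAndDerivatives_inl {κ : Type*} {n : ℕ} (p w : κ → Fin n → k)
    (F : MvPolynomial (Fin n) k) (i : κ) : valuesAndDerivatives p w F (.inl i) = eval (p i) F := by
  simp [valuesAndDerivatives, evalLM, aeval_eq_eval]

@[simp]
lemma valuesAndDerivatives_inr {κ : Type*} {n : ℕ} (p w : κ → Fin n → k)
    (F : MvPolynomial (Fin n) k) (i : κ) :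
    valuesAndDerivatives p w F (.inr i) = dirDeriv (p i) (w i) F := rfl

lemma multiples_sup_le_ker_valuesAndDerivatives {κ : Type*} {n : ℕ} {p w : κ → Fin n → k}
    {F G : MvPolynomial (Fin n) k} (hF : valuesAndDerivatives p w F = 0)
    (hG : valuesAndDerivatives p w G = 0) (d e : ℕ) :
    multiples F d ⊔ multiples G e ≤ ker (valuesAndDerivatives p w) := by
  have mul_mem (F : MvPolynomial (Fin n) k) (hF : valuesAndDerivatives p w F = 0) (d : ℕ) :
      multiples F d ≤ ker (valuesAndDerivatives p w) := by
    intro _ hmem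
    obtain ⟨H, -, rfl⟩ := mem_multiples.1 hmem
    have hval (i) : eval (p i) F = 0 := by simpa using congrFun hF (.inl i)
    have hder (i) : dirDeriv (p i) (w i) F = 0 := by simpa using congrFun hF (.inr i)
    ext (i | i) <;> simp [dirDeriv_mul, hval, hder]
  exact sup_le (mul_mem F hF d) (mul_mem G hG e)

/-- The derivatives along `w i` at the points `p i` sum to zero on forms of degree `d`. A nonzero
`w` with this property witnesses that the double points at the `p i` fail to impose independent
conditions on forms of degree `d`. -/
def IsTangentRelation {κ : Type*} [Fintype κ] {n : ℕ} (d : ℕ) (p w : κ → Fin n → k) : Prop :=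
  ∀ F : MvPolynomial (Fin n) k, F.IsHomogeneous d → ∑ i, dirDeriv (p i) (w i) F = 0

lemma isTangentRelation_extend_iff {κ κ' : Type*} [Fintype κ] [Fintype κ'] {n d : ℕ} {f : κ → κ'}
    (hf : f.Injective) {p : κ' → Fin n → k} {w : κ → Fin n → k} :
    IsTangentRelation d p (Function.extend f w 0) ↔ IsTangentRelation d (p ∘ f) w := by
  refine forall₂_congr fun F _ => ?_
  rw [Fintype.sum_of_injective f hf (fun i => dirDeriv ((p ∘ f) i) (w i) F)
    (fun i => dirDeriv (p i) (Function.extend f w 0 i) F)]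
  · exact fun i hi => by simp [Function.extend_apply' _ _ _ hi]
  · exact fun i => by rw [hf.extend_apply, Function.comp_apply]

-- By Euler's formula, the value of a form of degree `d` at `p` is its derivative along `p / d`.
lemma exists_isTangentRelation_of_sum_valuesAndDerivatives {κ : Type*} [Fintype κ] {n d : ℕ}
    {p w : κ → Fin n → k} (hd : (d : k) ≠ 0) (hp : ∀ i, p i ≠ 0) (hw : ∀ i, w i ∉ span k {p i})
    {c : κ ⊕ κ → k} (hc : c ≠ 0) (hrel : ∀ F : MvPolynomial (Fin n) k, F.IsHomogeneous d →
      ∑ i, c i * valuesAndDerivatives p w F i = 0) :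
    ∃ v : κ → Fin n → k, v ≠ 0 ∧ IsTangentRelation d p v := by
  refine ⟨fun i => (c (.inl i) * (d : k)⁻¹) • p i + c (.inr i) • w i, fun hv => hc ?_,
    fun F hF => ?_⟩
  · have hv (i : κ) : (c (.inl i) * (d : k)⁻¹) • p i + c (.inr i) • w i = 0 := congrFun hv i
    have hinr (i : κ) : c (.inr i) = 0 := by
      by_contra hne
      refine hw i ((Submodule.smul_mem_iff _ hne).1 ?_)
      rw [eq_neg_of_add_eq_zero_right (hv i)]
      exact neg_mem (Submodule.smul_mem _ _ (mem_span_singleton_self _))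
    have hinl (i : κ) : c (.inl i) = 0 := by simpa [hinr, hp, hd] using hv i
    exact funext (Sum.rec hinl hinr)
  · have hF' := hrel F hF
    rw [Fintype.sum_sum_type, ← sum_add_distrib] at hF'
    rw [← hF']
    refine sum_congr rfl fun i _ => ?_
    simp only [map_add, map_smul, LinearMap.add_apply, LinearMap.smul_apply, dirDeriv_self hF,
      smul_eq_mul, valuesAndDerivatives_inl, valuesAndDerivatives_inr]
    field_simp

theorem exists_isTangentRelation_of_plane_curve {κ : Type*} [Fintype κ] {p : κ → Fin 4 → k}
    {d : ℕ} (hμ : μ ≠ 0) (hq : q.IsHomogeneous m) (hdvd : ¬ linForm μ ∣ q) (hmd : m < d)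
    (hd : (d : k) ≠ 0) (hp : ∀ i, p i ≠ 0) (hpμ : ∀ i, μ (p i) = 0)
    (hpq : ∀ i, eval (p i) q = 0) (hcard : m * d + 2 ≤ 2 * Fintype.card κ) :
    ∃ w : κ → Fin 4 → k, w ≠ 0 ∧ IsTangentRelation d p w := by
  choose w hwμ hwq hwp using fun i =>
    exists_tangent_notMem_span μ ((dirDeriv (p i)).flip q) (p i)
  obtain ⟨e, rfl⟩ : ∃ e, d = m + e + 1 := ⟨d - m - 1, by omega⟩
  let V := homogeneousSubmodule (Fin 4) k (m + e + 1)
  let K := multiples (linForm μ) (m + e) ⊔ multiples q (e + 1)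
  have hKV : K ≤ V := by
    refine sup_le ?_ (multiples_le_homogeneousSubmodule hq _)
    simpa only [add_comm 1] using
      multiples_le_homogeneousSubmodule (isHomogeneous_linForm μ) (m + e)
  have hK : K ≤ ker (valuesAndDerivatives p w) := multiples_sup_le_ker_valuesAndDerivatives
    (by ext (i | i) <;> simp [hpμ, hwμ])
    (by ext (i | i) <;> simp [hpq, show dirDeriv (p i) (w i) q = 0 from hwq i]) _ _
  obtain ⟨c, hc, hrel⟩ := exists_ne_zero_forall_dotProduct_eq_zero
    ((valuesAndDerivatives p w).comp V.subtype) (K := K.comap V.subtype)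
    (fun F hF => hK hF) (by
      have : finrank k V ≤ finrank k K + m * (m + e + 1) + 1 :=
        finrank_homogeneousSubmodule_le_finrank_multiples_sup hμ hdvd e
      rw [(Submodule.comapSubtypeEquivOfLe hKV).finrank_eq, Fintype.card_sum]
      omega)
  exact exists_isTangentRelation_of_sum_valuesAndDerivatives hd hp hwp hc fun F hF => hrel ⟨F, hF⟩

end PlaneCurve

/-! ### Relations of extremal degree -/

section Extremal

variable {k : Type*} [Field k] {n : ℕ} {ι : Type*} [Fintype ι] {J : Finset ι}

lemma exists_sum_eval_eq_zero_of_deg_le_card {p : ι → Fin n → k} {Z : ι → Jet k n} {r : ℕ}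
    (hr : IsRelation r p Z) (hJ : ∀ i ∈ J, 1 ≤ (Z i).deg) (hdeg : deg Z ≤ #J) :
    ∃ c : ι → k, (∀ i ∈ J, c i ≠ 0) ∧
      ∀ F : MvPolynomial (Fin n) k, F.IsHomogeneous r → ∑ i ∈ J, c i * eval (p i) F = 0 := by
  classical
  have hle (i) (_ : i ∈ univ) : (if i ∈ J then 1 else 0) ≤ (Z i).deg := by
    split_ifs with hi
    exacts [hJ i hi, Nat.zero_le _]
  have hcard : ∑ i, (if i ∈ J then 1 else 0) = #J := by simp
  have hdegZ (i) : (Z i).deg = if i ∈ J then 1 else 0 :=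
    ((sum_eq_sum_iff_of_le hle).1
      ((sum_le_sum hle).antisymm (hcard.symm ▸ hdeg)) i (mem_univ i)).symm
  have hdir (i) : (Z i).dir = 0 := Jet.deg_le_one_iff.1 (by rw [hdegZ]; split_ifs <;> simp)
  refine ⟨fun i => (Z i).coeff, fun i hi h0 => ?_, fun F hF => ?_⟩
  · exact one_ne_zero (((hdegZ i).trans (if_pos hi)).symm.trans
      (Jet.deg_eq_zero_iff.2 ⟨h0, hdir i⟩))
  · rw [← hr F hF]
    simp only [Jet.functional_apply, hdir, map_zero, LinearMap.zero_apply, add_zero]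
    refine sum_subset (subset_univ J) fun i _ hi => ?_
    rw [(Jet.deg_eq_zero_iff.1 ((hdegZ i).trans (if_neg hi))).1, zero_mul]

lemma exists_hyperplane_forall_deg_residual_pos [Infinite k] {p : ι → Fin (n + 1) → k}
    {Z : ι → Jet k (n + 1)}
    (hplane : ∀ l : Dual k (Fin (n + 1) → k), l ≠ 0 → degIn (ker l) p Z ≤ n)
    (hJ : ∀ i ∈ J, 1 ≤ (Z i).deg) (hdeg : n + #J ≤ deg Z) :
    ∃ l : Dual k (Fin (n + 1) → k), deg (residual (linForm l) p Z) + n = deg Z ∧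
      ∀ i ∈ J, 1 ≤ (residual (linForm l) p Z i).deg := by
  classical
  obtain ⟨f, hf, hsum⟩ := exists_le_sum_eq (fun i => (Z i).deg - if i ∈ J then 1 else 0) n (by
    have hsplit : ∑ i, ((Z i).deg - if i ∈ J then 1 else 0) + #J = deg Z := by
      rw [show #J = ∑ i, if i ∈ J then 1 else 0 by simp, ← sum_add_distrib]
      refine sum_congr rfl fun i _ => Nat.sub_add_cancel ?_
      split_ifs with hi
      exacts [hJ i hi, Nat.zero_le _]
    omega)
  obtain ⟨U, hU, hfU⟩ :=
    exists_submodule_forall_le_degIn p f fun i => (hf i).trans (Nat.sub_le _ _)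
  obtain ⟨l, hl, hUl, -⟩ := exists_dual_degIn_ker_eq p Z (L := U) (by omega)
  have hle (i) (_ : i ∈ univ) : f i ≤ (Z i).degIn (ker l) (p i) :=
    (hfU i).trans (Jet.degIn_mono hUl _ _)
  have hn : degIn (ker l) p Z = n := (hplane l hl).antisymm (hsum.symm.trans_le (sum_le_sum hle))
  have hres := deg_residual_linForm_add_degIn p Z l
  refine ⟨l, by rwa [hn] at hres, fun i hi => ?_⟩
  have hfi := (sum_eq_sum_iff_of_le hle).1 (hsum.trans hn.symm) i (mem_univ i)
  have hi' := (Z i).deg_residual_linForm_add_degIn l (p i)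
  have := hf i
  have := hJ i hi
  simp only [if_pos hi] at *
  simp only [residual]
  omega

theorem exists_sum_eval_eq_zero_of_forall_degIn_le [Infinite k] {p : ι → Fin (n + 1) → k}
    {Z : ι → Jet k (n + 1)} {r m : ℕ} (hr : IsRelation (r + m) p Z)
    (hdeg : deg Z = #J + n * m)
    (hplane : ∀ l : Dual k (Fin (n + 1) → k), l ≠ 0 → degIn (ker l) p Z ≤ n)
    (hJ : ∀ i ∈ J, 1 ≤ (Z i).deg) :
    ∃ c : ι → k, (∀ i ∈ J, c i ≠ 0) ∧
      ∀ F : MvPolynomial (Fin (n + 1)) k, F.IsHomogeneous r → ∑ i ∈ J, c i * eval (p i) F = 0 := by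
  induction m generalizing Z with
  | zero => exact exists_sum_eval_eq_zero_of_deg_le_card hr hJ hdeg.le
  | succ m ih =>
    rw [mul_add_one] at hdeg
    obtain ⟨l, hl, hpos⟩ := exists_hyperplane_forall_deg_residual_pos hplane hJ (by omega)
    exact ih (hr.residual (e := r + m) (isHomogeneous_linForm l)) (by omega)
      (fun h hh => (degIn_residual_le _ p Z _).trans (hplane h hh)) hpos

end Extremal

/-! ### Castelnuovo's lemma for twisted cubics -/

section Castelnuovo

open Matrix
open Function (Injective)

variable {k : Type*} [Field k] {κ : Type*} {n : ℕ}

lemma inv_dotProduct_mul_eq_zero_of_transpose_mul_diagonal_mul [Fintype κ] [DecidableEq κ]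
    {x : Matrix κ κ k} {a c : κ → k} (ha : ∀ i, a i ≠ 0) (hc : ∀ i, c i ≠ 0)
    (h : xᵀ * diagonal c * x = diagonal a) {u v : κ} (huv : u ≠ v) : a⁻¹ ⬝ᵥ (x u * x v) = 0 := by
  have hleft : diagonal a⁻¹ * xᵀ * diagonal c * x = 1 := by
    rw [Matrix.mul_assoc, Matrix.mul_assoc, ← Matrix.mul_assoc xᵀ, h, diagonal_mul_diagonal]
    simp [ha]
  have hright : x * (diagonal a⁻¹ * xᵀ * diagonal c) = 1 := mul_eq_one_comm.1 hleft
  have huv' := congrFun (congrFun hright u) v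
  rw [← Matrix.mul_assoc, mul_diagonal, one_apply_ne huv, mul_eq_zero, or_iff_left (hc v)] at huv'
  simpa only [Matrix.mul_apply (M := x), diagonal_mul, transpose_apply, dotProduct,
    Pi.mul_apply, mul_left_comm (x u _)] using huv'

lemma exists_eq_smul_of_forall_dotProduct_eq_zero {v : Fin n → Fin (n + 1) → k}
    (hv : LinearIndependent k v) {d d' : Fin (n + 1) → k} (hd : d ≠ 0)
    (h : ∀ j, v j ⬝ᵥ d = 0) (h' : ∀ j, v j ⬝ᵥ d' = 0) : ∃ c : k, d' = c • d := by
  have hrank : (Matrix.of v).rank = n := by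
    rw [LinearIndependent.rank_matrix (M := Matrix.of v) hv, Fintype.card_fin]
  have hker : finrank k (ker (Matrix.of v).mulVecLin) = 1 := by
    have hadd := LinearMap.finrank_range_add_finrank_ker (Matrix.of v).mulVecLin
    rw [Module.finrank_fin_fun] at hadd
    rw [Matrix.rank] at hrank
    omega
  obtain ⟨c, hc⟩ := (finrank_eq_one_iff_of_nonzero' (⟨d, funext h⟩ : ker (Matrix.of v).mulVecLin)
    (fun h0 => hd (congrArg Subtype.val h0))).1 hker ⟨d', funext h'⟩
  exact ⟨c, (congrArg Subtype.val hc).symm⟩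

/-- The vectors `x i` represent points in linearly general position: no hyperplane contains
`n` of them. -/
def InGeneralPosition (x : κ → Fin n → k) : Prop :=
  ∀ l : Dual k (Fin n → k), l ≠ 0 → ∀ J : Finset κ, #J = n → ∃ i ∈ J, l (x i) ≠ 0

lemma InGeneralPosition.linearIndependent_comp {x : κ → Fin n → k} (hx : InGeneralPosition x)
    {f : Fin n → κ} (hf : Injective f) : LinearIndependent k (x ∘ f) := by
  classical
  by_contra hdep
  have hlt : span k (Set.range (x ∘ f)) < ⊤ := lt_top_iff_ne_top.2 fun htop =>
    hdep (linearIndependent_of_top_le_span_of_card_eq_finrank htop.ge (by simp))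
  obtain ⟨l, hl, hle⟩ := Submodule.exists_le_ker_of_lt_top _ hlt
  obtain ⟨_, hi, hne⟩ := hx l hl (univ.image f) (by rw [card_image_of_injective _ hf, card_fin])
  obtain ⟨j, -, rfl⟩ := mem_image.1 hi
  exact hne (hle (Submodule.subset_span ⟨j, rfl⟩))

lemma InGeneralPosition.coord_ne_zero {x : κ → Fin n → k} (hx : InGeneralPosition x)
    {a : Fin n ↪ κ} (ha : ∀ j, x (a j) = Pi.single j 1) {i : κ} (hi : i ∉ Set.range a)
    (j : Fin n) : x i j ≠ 0 := by
  classical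
  intro h0
  have hproj : (LinearMap.proj j : Dual k (Fin n → k)) ≠ 0 := fun h => by
    simpa using LinearMap.congr_fun h (Pi.single j 1)
  have hi' : i ∉ (univ.erase j).map a := fun h => by
    obtain ⟨m, -, rfl⟩ := Finset.mem_map.1 h
    exact hi ⟨m, rfl⟩
  obtain ⟨m, hm, hne⟩ := hx _ hproj (insert i ((univ.erase j).map a)) (by
    rw [card_insert_of_notMem hi', card_map, card_erase_add_one (mem_univ j), card_fin])
  rcases Finset.mem_insert.1 hm with rfl | hm
  · exact hne h0
  · obtain ⟨j', hj', rfl⟩ := Finset.mem_map.1 hm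
    exact hne (by simp [ha, (ne_of_mem_erase hj').symm])

lemma InGeneralPosition.minor_ne_zero {x : κ → Fin n → k} (hx : InGeneralPosition x)
    {a : Fin n ↪ κ} (ha : ∀ j, x (a j) = Pi.single j 1) {b c : κ} (hb : b ∉ Set.range a)
    (hc : c ∉ Set.range a) (hbc : b ≠ c) {i j : Fin n} (hij : i ≠ j) :
    x b i * x c j ≠ x b j * x c i := by
  classical
  intro h0
  set l : Dual k (Fin n → k) := x b j • LinearMap.proj i - x b i • LinearMap.proj j with hl
  have hl0 : l ≠ 0 := fun h => by
    have := LinearMap.congr_fun h (Pi.single i 1)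
    simp [hl, hij, hx.coord_ne_zero ha hb] at this
  have hmem {y : κ} (hy : y ∉ Set.range a) : y ∉ ((univ.erase i).erase j).map a := fun h => by
    obtain ⟨m, -, rfl⟩ := Finset.mem_map.1 h
    exact hy ⟨m, rfl⟩
  obtain ⟨m, hm, hne⟩ := hx l hl0 (insert b (insert c (((univ.erase i).erase j).map a))) (by
    rw [card_insert_of_notMem (by
        simp only [Finset.mem_insert, hbc, hmem hb, or_self, not_false_iff]),
      card_insert_of_notMem (hmem hc), card_map,
      card_erase_add_one (mem_erase.2 ⟨hij.symm, mem_univ j⟩),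
      card_erase_add_one (mem_univ i), card_fin])
  simp only [Finset.mem_insert, Finset.mem_map, mem_erase, Finset.mem_univ, and_true] at hm
  rcases hm with rfl | rfl | ⟨m, ⟨hmj, hmi⟩, rfl⟩
  · exact hne (by simp [hl, mul_comm])
  · exact hne (by simp only [hl, LinearMap.sub_apply, LinearMap.smul_apply, LinearMap.proj_apply,
      smul_eq_mul]; linear_combination -h0)
  · exact hne (by simp [hl, ha, hmi.symm, hmj.symm])

/-- The points `x i` for `i ∈ J` satisfy a linear relation on quadrics in which all coefficients
are nonzero. Only products of two linear forms are tested, since these span the quadrics. -/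
def HasQuadricRelation (x : κ → Fin n → k) (J : Finset κ) : Prop :=
  ∃ c : κ → k, (∀ i ∈ J, c i ≠ 0) ∧
    ∀ l h : Dual k (Fin n → k), ∑ i ∈ J, c i * (l (x i) * h (x i)) = 0

lemma disjoint_univ_map_univ_image [DecidableEq κ] {ν ν' : Type*} [Fintype ν] [Fintype ν']
    {a : ν ↪ κ} {b : ν' → κ} (hab : ∀ j, b j ∉ Set.range a) :
    Disjoint (univ.map a) (univ.image b) := by
  rw [Finset.disjoint_right]
  intro _ hj hj'
  obtain ⟨j, -, rfl⟩ := Finset.mem_image.1 hj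
  obtain ⟨i, -, hi⟩ := Finset.mem_map.1 hj'
  exact hab j ⟨i, hi⟩

lemma HasQuadricRelation.exists_dotProduct_mul_eq_zero [DecidableEq κ] {x : κ → Fin n → k}
    {a : Fin n ↪ κ} (ha : ∀ j, x (a j) = Pi.single j 1) {b : Fin n → κ} (hb : Injective b)
    (hab : ∀ j, b j ∉ Set.range a) (h : HasQuadricRelation x (univ.map a ∪ univ.image b)) :
    ∃ δ : Fin n → k, (∀ i, δ i ≠ 0) ∧ ∀ u v, u ≠ v → δ ⬝ᵥ (x (b u) * x (b v)) = 0 := by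
  obtain ⟨c, hc, hrel⟩ := h
  have hca (i) : -c (a i) ≠ 0 :=
    neg_ne_zero.2 (hc _ (mem_union_left _ (mem_map_of_mem _ (mem_univ i))))
  refine ⟨(fun i => -c (a i))⁻¹, fun i => inv_ne_zero (hca i), fun u v huv =>
    inv_dotProduct_mul_eq_zero_of_transpose_mul_diagonal_mul (x := Matrix.of (x ∘ b)) hca
      (c := c ∘ b) (fun i => hc _ (mem_union_right _ (mem_image_of_mem _ (mem_univ i)))) ?_ huv⟩
  ext i j
  have hij := hrel (LinearMap.proj i) (LinearMap.proj j)
  rw [sum_union (disjoint_univ_map_univ_image hab), sum_map, sum_image hb.injOn] at hij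
  have hdiag : ∑ m, c (a m) * (x (a m) i * x (a m) j) = diagonal (c ∘ a) i j := by
    rw [sum_eq_single i (by intro m _ hm; simp [ha, hm.symm]) (by simp)]
    by_cases h : i = j <;> simp [ha, h, eq_comm]
  simp only [LinearMap.proj_apply, hdiag] at hij
  rw [Matrix.mul_apply]
  simp only [mul_diagonal, transpose_apply, of_apply, Function.comp_apply, diagonal_apply] at hij ⊢
  have hsum : ∑ m, x (b m) i * c (b m) * x (b m) j = ∑ m, c (b m) * (x (b m) i * x (b m) j) :=
    sum_congr rfl fun m _ => by ring
  rw [hsum]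
  split_ifs at hij ⊢ <;> linear_combination hij

-- If the three products were independent, `δ` and `δ'` would be proportional, and then `δ * q`
-- and `δ * q'` would both span the orthogonal complement of `y 0, y 1, y 2`.
lemma not_linearIndependent_mul_of_dotProduct_eq_zero {y : Fin 3 → Fin 4 → k}
    (hy : LinearIndependent k y) {δ δ' q q' : Fin 4 → k} (hδ : ∀ i, δ i ≠ 0) (hδ' : δ' ≠ 0)
    (horth : ∀ u v, u ≠ v → δ ⬝ᵥ (y u * y v) = 0) (horth' : ∀ u v, u ≠ v → δ' ⬝ᵥ (y u * y v) = 0)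
    (hq : ∀ u, δ ⬝ᵥ (y u * q) = 0) (hq' : ∀ u, δ' ⬝ᵥ (y u * q') = 0) (hq0 : q ≠ 0)
    (hqq' : ∀ r : k, q' ≠ r • q) :
    ¬ LinearIndependent k ![y 0 * y 1, y 0 * y 2, y 1 * y 2] := by
  intro hli
  have hperp {ε : Fin 4 → k} (h : ∀ u v, u ≠ v → ε ⬝ᵥ (y u * y v) = 0) (j) :
      (![y 0 * y 1, y 0 * y 2, y 1 * y 2] j) ⬝ᵥ ε = 0 := by
    rw [dotProduct_comm]
    fin_cases j
    exacts [h 0 1 (by decide), h 0 2 (by decide), h 1 2 (by decide)]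
  have hmul (v w : Fin 4 → k) : v ⬝ᵥ (δ * w) = δ ⬝ᵥ (v * w) :=
    sum_congr rfl fun i _ => mul_left_comm _ _ _
  obtain ⟨c, rfl⟩ := exists_eq_smul_of_forall_dotProduct_eq_zero hli
    (fun h => hδ 0 (congrFun h 0)) (hperp horth) (hperp horth')
  have hc : c ≠ 0 := fun h => hδ' (by rw [h, zero_smul])
  have hδq : δ * q ≠ 0 := fun h => hq0 (funext fun i =>
    (mul_eq_zero.1 (congrFun h i)).resolve_left (hδ i))
  obtain ⟨r, hr⟩ := exists_eq_smul_of_forall_dotProduct_eq_zero (d' := δ * q') hy hδq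
    (fun u => (hmul _ _).trans (hq u)) fun u => by
      have := hq' u
      rwa [smul_dotProduct, smul_eq_mul, mul_eq_zero, or_iff_right hc, ← hmul] at this
  exact hqq' r (funext fun i => mul_left_cancel₀ (hδ i) (by
    simpa [mul_left_comm] using congrFun hr i))

lemma exists_inv_eq_of_not_linearIndependent_mul {ν : Type*} {y : Fin 3 → ν → k}
    (hy : LinearIndependent k y) (hy0 : ∀ u i, y u i ≠ 0)
    (h : ¬ LinearIndependent k ![y 0 * y 1, y 0 * y 2, y 1 * y 2]) :
    ∃ s t : k, (y 2)⁻¹ = s • (y 0)⁻¹ + t • (y 1)⁻¹ := by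
  rw [Fintype.linearIndependent_iff] at h
  push Not at h
  obtain ⟨g, hg, j, hj⟩ := h
  have hrel (i) : g 0 * (y 0 i * y 1 i) + g 1 * (y 0 i * y 2 i) + g 2 * (y 1 i * y 2 i) = 0 := by
    simpa [Fin.sum_univ_three] using congrFun hg i
  have hg0 : g 0 ≠ 0 := by
    intro h0
    have hdep : ∑ u, ![g 1, g 2, 0] u • y u = 0 := funext fun i => by
      refine mul_left_cancel₀ (hy0 2 i) ?_
      have := hrel i
      simp only [Fin.sum_univ_three, Pi.add_apply, Pi.smul_apply, smul_eq_mul, Matrix.cons_val,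
        Pi.zero_apply]
      linear_combination this - y 0 i * y 1 i * h0
    have hz := Fintype.linearIndependent_iff.1 hy _ hdep
    fin_cases j
    exacts [hj h0, hj (hz 0), hj (hz 1)]
  refine ⟨-(g 2) / g 0, -(g 1) / g 0, funext fun i => ?_⟩
  have := hy0 0 i
  have := hy0 1 i
  have := hy0 2 i
  simp only [Pi.add_apply, Pi.smul_apply, Pi.inv_apply, smul_eq_mul]
  field_simp
  linear_combination hrel i

lemma exists_dotProduct_mul_eq_zero_of_hasQuadricRelation {x : κ → Fin (n + 1) → k}
    {a : Fin (n + 1) ↪ κ} (ha : ∀ j, x (a j) = Pi.single j 1)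
    (hquad : ∀ J : Finset κ, #J = 2 * (n + 1) → HasQuadricRelation x J) {b : Fin n → κ} {q : κ}
    (hb : Injective b) (hba : ∀ u, b u ∉ Set.range a) (hqa : q ∉ Set.range a)
    (hqb : q ∉ Set.range b) :
    ∃ δ : Fin (n + 1) → k, (∀ i, δ i ≠ 0) ∧
      (∀ u v, u ≠ v → δ ⬝ᵥ (x (b u) * x (b v)) = 0) ∧ ∀ u, δ ⬝ᵥ (x (b u) * x q) = 0 := by
  classical
  set c : Fin (n + 1) → κ := Fin.snoc b q with hc
  have hcinj : Injective c := Fin.snoc_injective_iff.2 ⟨hb, hqb⟩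
  have hca (j) : c j ∉ Set.range a := by
    refine Fin.lastCases ?_ (fun u => ?_) j
    · rwa [hc, Fin.snoc_last]
    · rw [hc, Fin.snoc_castSucc]
      exact hba u
  have hcard : #(univ.map a ∪ univ.image c) = 2 * (n + 1) := by
    rw [card_union_of_disjoint (disjoint_univ_map_univ_image hca), card_map,
      card_image_of_injective _ hcinj, card_fin, two_mul]
  obtain ⟨δ, hδ, horth⟩ := (hquad _ hcard).exists_dotProduct_mul_eq_zero ha hcinj hca
  refine ⟨δ, hδ, fun u v huv => ?_, fun u => ?_⟩
  · simpa only [hc, Fin.snoc_castSucc] using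
      horth u.castSucc v.castSucc ((Fin.castSucc_injective n).ne huv)
  · simpa only [hc, Fin.snoc_castSucc, Fin.snoc_last] using
      horth u.castSucc (Fin.last n) (Fin.castSucc_ne_last u)

lemma exists_inv_eq_of_hasQuadricRelation {x : κ → Fin 4 → k} (hx : InGeneralPosition x)
    {a : Fin 4 ↪ κ} (ha : ∀ j, x (a j) = Pi.single j 1)
    (hquad : ∀ J : Finset κ, #J = 8 → HasQuadricRelation x J) {b : Fin 3 → κ} {q q' : κ}
    (hb : Injective b) (hba : ∀ u, b u ∉ Set.range a) (hqa : q ∉ Set.range a)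
    (hqb : q ∉ Set.range b) (hqa' : q' ∉ Set.range a) (hqb' : q' ∉ Set.range b) (hqq' : q ≠ q') :
    ∃ s t : k, (x (b 2))⁻¹ = s • (x (b 0))⁻¹ + t • (x (b 1))⁻¹ := by
  obtain ⟨δ, hδ, horth, hδq⟩ :=
    exists_dotProduct_mul_eq_zero_of_hasQuadricRelation ha hquad hb hba hqa hqb
  obtain ⟨δ', hδ', horth', hδq'⟩ :=
    exists_dotProduct_mul_eq_zero_of_hasQuadricRelation ha hquad hb hba hqa' hqb'
  have hli : LinearIndependent k (x ∘ b) := by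
    have := (hx.linearIndependent_comp (Fin.snoc_injective_iff.2 ⟨hb, hqb⟩ :
      Injective (Fin.snoc b q : Fin 4 → κ))).comp Fin.castSucc (Fin.castSucc_injective 3)
    rwa [Function.comp_assoc, Fin.snoc_comp_castSucc] at this
  have hqq (r : k) : x q' ≠ r • x q := by
    intro h
    have hf : Injective (Fin.cons q' (Fin.cons q (b ∘ Fin.castSucc)) : Fin 4 → κ) := by
      have hrange : Set.range (b ∘ Fin.castSucc) ⊆ Set.range b := Set.range_comp_subset_range _ _
      rw [Fin.cons_injective_iff, Fin.cons_injective_iff, Fin.range_cons, Set.mem_insert_iff]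
      exact ⟨not_or.2 ⟨hqq'.symm, fun h => hqb' (hrange h)⟩, fun h => hqb (hrange h),
        hb.comp (Fin.castSucc_injective 2)⟩
    refine (hx.linearIndependent_comp hf).notMem_span_image (s := {1}) (x := 0) (by simp) ?_
    rw [Set.image_singleton, Submodule.mem_span_singleton]
    exact ⟨r, h.symm⟩
  refine exists_inv_eq_of_not_linearIndependent_mul hli
    (fun u => hx.coord_ne_zero ha (hba u)) ?_
  exact not_linearIndependent_mul_of_dotProduct_eq_zero hli hδ (fun h => hδ' 0 (congrFun h 0))
    horth horth' hδq hδq' (fun h => hx.coord_ne_zero ha hqa 0 (congrFun h 0)) hqq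

lemma stdRNCvec_succ_castSucc (s t : k) (i : Fin (n + 1)) :
    stdRNCvec k (n + 1) s t i.castSucc = s * stdRNCvec k n s t i := by
  simp only [stdRNCvec, Fin.val_castSucc, Nat.succ_sub (Nat.lt_succ_iff.1 i.2), pow_succ']
  ring

lemma stdRNCvec_succ_succ (s t : k) (i : Fin (n + 1)) :
    stdRNCvec k (n + 1) s t i.succ = t * stdRNCvec k n s t i := by
  simp only [stdRNCvec, Fin.val_succ, Nat.add_sub_add_right, pow_succ']
  ring

lemma exists_dotProduct_stdRNCvec_eq_prod (β α : Fin n → k) :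
    ∃ r : Fin (n + 1) → k, ∀ s t, r ⬝ᵥ stdRNCvec k n s t = ∏ j, (s * β j + t * α j) := by
  induction n with
  | zero => exact ⟨1, fun s t => by simp [stdRNCvec, dotProduct]⟩
  | succ n ih =>
    obtain ⟨r, hr⟩ := ih (β ∘ Fin.succ) (α ∘ Fin.succ)
    refine ⟨Fin.snoc (β 0 • r) 0 + Fin.cons 0 (α 0 • r), fun s t => ?_⟩
    have hs : (Fin.snoc (β 0 • r) 0 : Fin (n + 2) → k) ⬝ᵥ stdRNCvec k (n + 1) s t =
        s * β 0 * (r ⬝ᵥ stdRNCvec k n s t) := by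
      simp only [dotProduct, Fin.sum_univ_castSucc (n := n + 1), Fin.snoc_castSucc, Fin.snoc_last,
        stdRNCvec_succ_castSucc, mul_sum, zero_mul, add_zero, Pi.smul_apply, smul_eq_mul]
      exact sum_congr rfl fun i _ => by ring
    have ht : (Fin.cons 0 (α 0 • r) : Fin (n + 2) → k) ⬝ᵥ stdRNCvec k (n + 1) s t =
        t * α 0 * (r ⬝ᵥ stdRNCvec k n s t) := by
      simp only [dotProduct, Fin.sum_univ_succ (n := n + 1), Fin.cons_zero, Fin.cons_succ,
        stdRNCvec_succ_succ, mul_sum, zero_mul, zero_add, Pi.smul_apply, smul_eq_mul]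
      exact sum_congr rfl fun i _ => by ring
    rw [add_dotProduct, hs, ht, hr, Fin.prod_univ_succ]
    simp only [Function.comp_apply]
    ring

lemma exists_prod_succAbove_eq_single {β α : Fin (n + 1) → k}
    (h : ∀ i j, i ≠ j → α i * β j ≠ β i * α j) (m : Fin (n + 1)) :
    ∃ c : k, c ≠ 0 ∧ (fun i : Fin (n + 1) =>
      ∏ j : Fin n, (α m * β (i.succAbove j) + -β m * α (i.succAbove j))) = Pi.single m c := by
  refine ⟨∏ j : Fin n, (α m * β (m.succAbove j) + -β m * α (m.succAbove j)),
    prod_ne_zero_iff.2 fun j _ => ?_, funext fun i => ?_⟩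
  · rw [neg_mul, ← sub_eq_add_neg, sub_ne_zero]
    exact h _ _ (m.succAbove_ne j).symm
  · rcases eq_or_ne i m with rfl | hi
    · rw [Pi.single_eq_same]
    · obtain ⟨j, hj⟩ := Fin.exists_succAbove_eq hi.symm
      rw [Pi.single_eq_of_ne hi]
      exact prod_eq_zero (mem_univ j) (by rw [hj]; ring)

lemma exists_linearEquiv_stdRNCvec_eq_prod {β α : Fin (n + 1) → k}
    (h : ∀ i j, i ≠ j → α i * β j ≠ β i * α j) :
    ∃ g : (Fin (n + 1) → k) ≃ₗ[k] (Fin (n + 1) → k), ∀ s t i,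
      g (stdRNCvec k n s t) i = ∏ j : Fin n, (s * β (i.succAbove j) + t * α (i.succAbove j)) := by
  choose r hr using fun i : Fin (n + 1) =>
    exists_dotProduct_stdRNCvec_eq_prod (β ∘ i.succAbove) (α ∘ i.succAbove)
  let M := (Matrix.of r).mulVecLin
  have hMi (s t i) : M (stdRNCvec k n s t) i =
      ∏ j : Fin n, (s * β (i.succAbove j) + t * α (i.succAbove j)) := hr i s t
  have hsurj : Function.Surjective M := by
    rw [← LinearMap.range_eq_top, eq_top_iff, ← (Pi.basisFun k (Fin (n + 1))).span_eq,
      Submodule.span_le]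
    rintro _ ⟨m, rfl⟩
    obtain ⟨c, hc, hm⟩ := exists_prod_succAbove_eq_single h m
    refine ⟨c⁻¹ • stdRNCvec k n (α m) (-β m), ?_⟩
    rw [map_smul, funext (hMi _ _), hm, Pi.basisFun_apply, ← Pi.single_smul, smul_eq_mul,
      inv_mul_cancel₀ hc]
  exact ⟨.ofBijective M ⟨LinearMap.injective_iff_surjective.2 hsurj, hsurj⟩, hMi⟩

/-- The nonzero vector `v` represents a point of the rational normal curve that is the image of
the standard one under `g`. -/
def IsOnRNC (g : (Fin (n + 1) → k) ≃ₗ[k] (Fin (n + 1) → k)) (v : Fin (n + 1) → k) : Prop :=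
  ∃ s t c : k, c ≠ 0 ∧ (s ≠ 0 ∨ t ≠ 0) ∧ v = c • g (stdRNCvec k n s t)

-- The coordinatewise inverse (Cremona) transformation turns lines into rational normal curves
-- through the coordinate points.
lemma exists_isOnRNC_of_inv_mem_line {x : κ → Fin (n + 1) → k} {a : Fin (n + 1) ↪ κ}
    (ha : ∀ j, x (a j) = Pi.single j 1) {y z : Fin (n + 1) → k} (hz : ∀ j, z j ≠ 0)
    (hyz : ∀ i j, i ≠ j → z i * y j ≠ y i * z j) (hx0 : ∀ i ∉ Set.range a, ∀ j, x i j ≠ 0)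
    (hx : ∀ i ∉ Set.range a, ∃ s t : k, (x i)⁻¹ = s • y + t • z) :
    ∃ g : (Fin (n + 1) → k) ≃ₗ[k] (Fin (n + 1) → k), ∀ i, IsOnRNC g (x i) := by
  obtain ⟨g, hg⟩ := exists_linearEquiv_stdRNCvec_eq_prod hyz
  refine ⟨g, fun i => ?_⟩
  by_cases hi : i ∈ Set.range a
  · obtain ⟨m, rfl⟩ := hi
    obtain ⟨c, hc, hm⟩ := exists_prod_succAbove_eq_single hyz m
    refine ⟨z m, -y m, c⁻¹, inv_ne_zero hc, Or.inl (hz m), ?_⟩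
    rw [funext (hg _ _), hm, ha, ← Pi.single_smul, smul_eq_mul, inv_mul_cancel₀ hc]
  · obtain ⟨s, t, hst⟩ := hx i hi
    have hst' (j) : (x i j)⁻¹ = s * y j + t * z j := congrFun hst j
    have hprod : ∏ j, (x i j)⁻¹ ≠ 0 := prod_ne_zero_iff.2 fun j _ => inv_ne_zero (hx0 i hi j)
    refine ⟨s, t, (∏ j, (x i j)⁻¹)⁻¹, inv_ne_zero hprod, ?_, funext fun m => ?_⟩
    · by_contra! h
      exact inv_ne_zero (hx0 i hi 0) (by rw [hst', h.1, h.2]; ring)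
    · rw [Pi.smul_apply, hg, smul_eq_mul, eq_inv_mul_iff_mul_eq₀ hprod,
        Fin.prod_univ_succAbove _ m, mul_right_comm, inv_mul_cancel₀ (hx0 i hi m), one_mul]
      exact prod_congr rfl fun j _ => hst' _

lemma exists_ne_notMem_of_card_add_two_le [Fintype κ] {T : Finset κ}
    (hT : #T + 2 ≤ Fintype.card κ) : ∃ q ∉ T, ∃ q' ∉ T, q ≠ q' := by
  classical
  obtain ⟨q, hq, q', hq', hne⟩ := one_lt_card.1
    (show 1 < #Tᶜ by rw [card_compl]; omega)
  exact ⟨q, mem_compl.1 hq, q', mem_compl.1 hq', hne⟩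

lemma exists_isOnRNC_of_coordinate_points [Fintype κ] (hκ : 9 ≤ Fintype.card κ)
    {x : κ → Fin 4 → k} (hx : InGeneralPosition x) {a : Fin 4 ↪ κ}
    (ha : ∀ j, x (a j) = Pi.single j 1)
    (hquad : ∀ J : Finset κ, #J = 8 → HasQuadricRelation x J) :
    ∃ g : (Fin 4 → k) ≃ₗ[k] (Fin 4 → k), ∀ i, IsOnRNC g (x i) := by
  classical
  have hA : #(univ.map a) = 4 := by rw [card_map, card_fin]
  have hmem (i : κ) : i ∉ univ.map a ↔ i ∉ Set.range a := by simp
  obtain ⟨b, hb, c, hc, hbc⟩ := exists_ne_notMem_of_card_add_two_le (T := univ.map a) (by omega)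
  rw [hmem] at hb hc
  have hcoord {i : κ} (hi : i ∉ Set.range a) := hx.coord_ne_zero ha hi
  refine exists_isOnRNC_of_inv_mem_line ha (y := (x b)⁻¹) (z := (x c)⁻¹)
    (fun j => inv_ne_zero (hcoord hc j)) (fun i j hij h => ?_) (fun _ => hcoord) fun i hi => ?_
  · refine hx.minor_ne_zero ha hb hc hbc hij ?_
    simp only [Pi.inv_apply, ← mul_inv, _root_.inv_inj] at h
    linear_combination -h
  by_cases hib : i = b
  · exact ⟨1, 0, by simp [hib]⟩
  by_cases hic : i = c
  · exact ⟨0, 1, by simp [hic]⟩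
  obtain ⟨q, hq, q', hq', hqq'⟩ :=
    exists_ne_notMem_of_card_add_two_le (T := univ.map a ∪ {b, c, i}) (by
      have := card_union_le (univ.map a) {b, c, i}
      have := card_le_three (a := b) (b := c) (c := i)
      omega)
  rw [Finset.mem_union, not_or, hmem] at hq hq'
  have hrange {r : κ} (hr : r ∉ ({b, c, i} : Finset κ)) : r ∉ Set.range ![b, c, i] := by
    simpa [or_comm, or_assoc, or_left_comm, eq_comm] using hr
  have hinj : Injective ![b, c, i] := by
    intro u v huv
    fin_cases u <;> fin_cases v <;> simp_all
  exact exists_inv_eq_of_hasQuadricRelation hx ha hquad hinj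
    (fun u => by fin_cases u; exacts [hb, hc, hi]) hq.1 (hrange hq.2) hq'.1 (hrange hq'.2) hqq'

theorem exists_isOnRNC_of_hasQuadricRelation [Fintype κ] (hκ : 9 ≤ Fintype.card κ)
    {x : κ → Fin 4 → k} (hx : InGeneralPosition x)
    (hquad : ∀ J : Finset κ, #J = 8 → HasQuadricRelation x J) :
    ∃ g : (Fin 4 → k) ≃ₗ[k] (Fin 4 → k), ∀ i, IsOnRNC g (x i) := by
  obtain ⟨a⟩ := Function.Embedding.nonempty_of_card_le (α := Fin 4) (β := κ) (by
    rw [Fintype.card_fin]; omega)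
  let B := basisOfLinearIndependentOfCardEqFinrank (hx.linearIndependent_comp a.injective) (by simp)
  let E := B.equivFun
  have hgen : InGeneralPosition fun i => E (x i) := fun l hl J hJ => by
    refine hx (l ∘ₗ E) (fun h => hl (LinearMap.ext fun v => ?_)) J hJ
    simpa using LinearMap.congr_fun h (E.symm v)
  have hcoord (j) : E (x (a j)) = Pi.single j 1 := by
    have hB : B j = x (a j) := by simp [B]
    ext i
    rw [← hB, B.equivFun_self, Pi.single_apply]
    exact if_congr eq_comm rfl rfl
  obtain ⟨g, hg⟩ := exists_isOnRNC_of_coordinate_points hκ hgen hcoord fun J hJ => by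
    obtain ⟨c, hc, hrel⟩ := hquad J hJ
    exact ⟨c, hc, fun l h => hrel (l ∘ₗ E) (h ∘ₗ E)⟩
  refine ⟨g.trans E.symm, fun i => ?_⟩
  obtain ⟨s, t, c, hc, hst, h⟩ := hg i
  exact ⟨s, t, c, hc, hst, by
    rw [LinearEquiv.trans_apply, ← map_smul, ← h, LinearEquiv.symm_apply_apply]⟩

lemma HasQuadricRelation.of_sum_eval_eq_zero {x : κ → Fin n → k} {J : Finset κ}
    (h : ∃ c : κ → k, (∀ i ∈ J, c i ≠ 0) ∧
      ∀ Q : MvPolynomial (Fin n) k, Q.IsHomogeneous 2 → ∑ i ∈ J, c i * eval (x i) Q = 0) :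
    HasQuadricRelation x J := by
  obtain ⟨c, hc, hrel⟩ := h
  refine ⟨c, hc, fun l h => ?_⟩
  simpa only [map_mul, eval_linForm] using
    hrel (linForm l * linForm h) ((isHomogeneous_linForm l).mul (isHomogeneous_linForm h))

lemma card_le_degIn [Fintype κ] {p : κ → Fin n → k} {Z : κ → Jet k n}
    {L : Submodule k (Fin n → k)} {J : Finset κ} (hJ : ∀ i ∈ J, 1 ≤ (Z i).deg)
    (hL : ∀ i ∈ J, p i ∈ L) : #J ≤ degIn L p Z :=
  calc #J = ∑ i ∈ J, 1 := card_eq_sum_ones J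
    _ ≤ ∑ i ∈ J, (Z i).degIn L (p i) := sum_le_sum fun i hi =>
      Jet.le_degIn_of_mem (hJ i hi) (fun _ => hL i hi) (by omega)
    _ ≤ degIn L p Z := sum_le_univ_sum_of_nonneg fun _ => Nat.zero_le _

lemma inGeneralPosition_of_forall_degIn_lt [Fintype κ] {p : κ → Fin n → k} {Z : κ → Jet k n}
    {T : Finset κ} (hT : ∀ i ∈ T, 1 ≤ (Z i).deg)
    (hplane : ∀ l : Dual k (Fin n → k), l ≠ 0 → degIn (ker l) p Z < n) :
    InGeneralPosition fun i : T => p i := fun l hl J hJ => by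
  by_contra! hvan
  have hcard : #(J.map (.subtype _)) ≤ degIn (ker l) p Z := by
    refine card_le_degIn (fun i hi => ?_) fun i hi => ?_ <;>
      obtain ⟨j, hj, rfl⟩ := Finset.mem_map.1 hi
    exacts [hT _ j.2, hvan j hj]
  rw [card_map, hJ] at hcard
  exact (hplane l hl).not_ge hcard

lemma exists_isOnRNC_of_forall_degIn_le [Fintype κ] {p : κ → Fin 4 → k} {Z : κ → Jet k 4}
    {T : Finset κ} (hT : 9 ≤ #T) (hTdeg : ∀ i ∈ T, 1 ≤ (Z i).deg)
    (hplane : ∀ l : Dual k (Fin 4 → k), l ≠ 0 → degIn (ker l) p Z ≤ 3)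
    (hquad : ∀ J ⊆ T, #J = 8 → HasQuadricRelation p J) :
    ∃ g : (Fin 4 → k) ≃ₗ[k] (Fin 4 → k), ∀ i ∈ T, IsOnRNC g (p i) := by
  have hgen : InGeneralPosition fun i : T => p i :=
    inGeneralPosition_of_forall_degIn_lt hTdeg fun l hl => Nat.lt_succ_of_le (hplane l hl)
  obtain ⟨g, hg⟩ := exists_isOnRNC_of_hasQuadricRelation (by rwa [Fintype.card_coe]) hgen
    fun J hJ => by
      obtain ⟨c, hc, hrel⟩ := hquad (J.map (.subtype _)) (map_subtype_subset J)
        (by rw [card_map, hJ])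
      exact ⟨fun i => c i, fun i hi => hc _ (mem_map_of_mem _ hi), fun l h =>
        (sum_map J (.subtype _) _).symm.trans (hrel l h)⟩
  exact ⟨g, fun i hi => hg ⟨i, hi⟩⟩

end Castelnuovo

/-! ### Quadrics through a rational normal curve -/

section Quadrics

variable {k : Type*} [Field k] {n : ℕ} {g : (Fin (n + 1) → k) ≃ₗ[k] (Fin (n + 1) → k)}

/-- The quadric `y a * y b - y c * y e` in the coordinates `y` given by `g.symm`. For
`a + b = c + e` it contains the image of the standard rational normal curve under `g`. -/
def rncQuadric (g : (Fin (n + 1) → k) ≃ₗ[k] (Fin (n + 1) → k)) (a b c e : Fin (n + 1)) :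
    MvPolynomial (Fin (n + 1)) k :=
  let y (j : Fin (n + 1)) := linForm (LinearMap.proj j ∘ₗ g.symm.toLinearMap)
  y a * y b - y c * y e

lemma isHomogeneous_rncQuadric (g : (Fin (n + 1) → k) ≃ₗ[k] (Fin (n + 1) → k))
    (a b c e : Fin (n + 1)) : (rncQuadric g a b c e).IsHomogeneous 2 :=
  ((isHomogeneous_linForm _).mul (isHomogeneous_linForm _)).sub
    ((isHomogeneous_linForm _).mul (isHomogeneous_linForm _))

lemma eval_rncQuadric_eq_zero_iff {v : Fin (n + 1) → k} {a b c e : Fin (n + 1)} :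
    eval v (rncQuadric g a b c e) = 0 ↔
      g.symm v a * g.symm v b = g.symm v c * g.symm v e := by
  simp [rncQuadric, sub_eq_zero]

lemma IsOnRNC.eval_rncQuadric_eq_zero {v : Fin (n + 1) → k} (hv : IsOnRNC g v)
    {a b c e : Fin (n + 1)} (h : (a : ℕ) + b = c + e) : eval v (rncQuadric g a b c e) = 0 := by
  obtain ⟨s, t, r, -, -, rfl⟩ := hv
  rw [eval_rncQuadric_eq_zero_iff]
  simp only [map_smul, LinearEquiv.symm_apply_apply, Pi.smul_apply, smul_eq_mul, stdRNCvec]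
  have hs : s ^ (n - a : ℕ) * s ^ (n - b : ℕ) = s ^ (n - c : ℕ) * s ^ (n - e : ℕ) := by
    rw [← pow_add, ← pow_add]
    congr 1
    omega
  have ht : t ^ (a : ℕ) * t ^ (b : ℕ) = t ^ (c : ℕ) * t ^ (e : ℕ) := by
    rw [← pow_add, ← pow_add, h]
  linear_combination r ^ 2 * t ^ (a : ℕ) * t ^ (b : ℕ) * hs +
    r ^ 2 * s ^ (n - c : ℕ) * s ^ (n - e : ℕ) * ht

lemma exists_smul_stdRNCvec_eq {y : Fin (n + 2) → k} (hy : y ≠ 0)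
    (h : ∀ a b c e : Fin (n + 2), (a : ℕ) + b = c + e → y a * y b = y c * y e) :
    ∃ s t r : k, r ≠ 0 ∧ (s ≠ 0 ∨ t ≠ 0) ∧ y = r • stdRNCvec k (n + 1) s t := by
  by_cases h0 : y 0 = 0
  · have hcastSucc (i : Fin (n + 1)) : y i.castSucc = 0 := by
      induction i using Fin.induction with
      | zero => exact h0
      | succ i ih =>
        have := h i.succ.castSucc i.succ.castSucc i.castSucc.castSucc i.succ.succ
          (by simp; omega)
        simpa [ih] using this
    have hlast : y = y (Fin.last _) • stdRNCvec k (n + 1) 0 1 := by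
      ext i
      induction i using Fin.lastCases with
      | last => simp [stdRNCvec]
      | cast i => simp [stdRNCvec, hcastSucc, Nat.sub_ne_zero_of_lt i.2]
    exact ⟨0, 1, y (Fin.last _), fun hr => hy (by rw [hlast, hr, zero_smul]), by simp, hlast⟩
  · refine ⟨1, y 1 / y 0, y 0, h0, by simp, funext fun i => ?_⟩
    induction i using Fin.induction with
    | zero => simp [stdRNCvec]
    | succ i ih =>
      have hstep := h i.succ 0 i.castSucc 1 (by simp)
      simp only [stdRNCvec, Pi.smul_apply, smul_eq_mul, one_pow, one_mul, Fin.val_succ,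
        Fin.val_castSucc] at ih ⊢
      rw [pow_succ, ← mul_assoc, ← ih, mul_div_assoc', ← hstep, mul_div_cancel_right₀ _ h0]

lemma isOnRNC_of_forall_eval_rncQuadric_eq_zero
    {g : (Fin (n + 2) → k) ≃ₗ[k] (Fin (n + 2) → k)} {v : Fin (n + 2) → k} (hv : v ≠ 0)
    (h : ∀ a b c e : Fin (n + 2), (a : ℕ) + b = c + e → eval v (rncQuadric g a b c e) = 0) :
    IsOnRNC g v := by
  obtain ⟨s, t, r, hr, hst, hy⟩ := exists_smul_stdRNCvec_eq (y := g.symm v) (by simpa using hv)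
    fun a b c e habce => eval_rncQuadric_eq_zero_iff.1 (h a b c e habce)
  exact ⟨s, t, r, hr, hst, by rw [← map_smul, ← hy, LinearEquiv.apply_symm_apply]⟩

end Quadrics

/-! ### Minimal configurations -/

section Minimal

variable {k : Type*} [Field k] {ι : Type*} [Fintype ι] {d : ℕ}

/-- The points `p i` are distinct, span the projective space, and the double points at any proper
subset of them impose independent conditions on forms of degree `d`. -/
structure IsMinimalConfiguration {n : ℕ} (d : ℕ) (p : ι → Fin n → k) : Prop where
  ne_zero : ∀ i, p i ≠ 0
  notMem_span : ∀ i j, i ≠ j → p j ∉ span k {p i}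
  exists_apply_ne_zero : ∀ l : Dual k (Fin n → k), l ≠ 0 → ∃ i, l (p i) ≠ 0
  eq_zero_of_apply_eq_zero : ∀ w, IsTangentRelation d p w → ∀ i, w i = 0 → w = 0

lemma IsTangentRelation.exists_isRelation {n : ℕ} {p w : ι → Fin n → k}
    (hw : IsTangentRelation d p w) (hd : (d : k) ≠ 0) (hne : ∀ i, p i ≠ 0)
    (hp : ∀ i j, i ≠ j → p j ∉ span k {p i}) :
    ∃ Z : ι → Jet k n, IsAdmissible p Z ∧ IsRelation d p Z ∧ ∀ i, (Z i).deg = 0 → w i = 0 := by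
  have hjet (i) : ∃ z : Jet k n, (z.dir ≠ 0 → z.dir ∉ span k {p i}) ∧
      (∀ F : MvPolynomial (Fin n) k, F.IsHomogeneous d →
        z.functional (p i) F = dirDeriv (p i) (w i) F) ∧ (z.deg = 0 → w i = 0) := by
    by_cases hwi : w i ∈ span k {p i}
    · obtain ⟨c, hc⟩ := Submodule.mem_span_singleton.1 hwi
      refine ⟨⟨d * c, 0⟩, by simp, fun F hF => ?_, ?_⟩
      · simp only [Jet.functional_apply, ← hc, map_smul, LinearMap.smul_apply, map_zero,
          LinearMap.zero_apply, dirDeriv_self hF, smul_eq_mul]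
        ring
      · simp [Jet.deg_eq_zero_iff, ← hc, hne, hd]
    · exact ⟨⟨0, w i⟩, fun _ => hwi, by simp [Jet.functional_apply], by
        simp [Jet.deg_eq_zero_iff]⟩
  choose Z hdir hfun hdeg using hjet
  exact ⟨Z, ⟨hne, hp, hdir⟩,
    fun F hF => (sum_congr rfl fun i _ => hfun i F hF).trans (hw F hF), hdeg⟩

variable {p : ι → Fin 4 → k} {Z : ι → Jet k 4} {A : Finset ι}

lemma IsMinimalConfiguration.two_mul_card_le_of_plane_curve (h : IsMinimalConfiguration d p)
    (hd : (d : k) ≠ 0) {μ : Dual k (Fin 4 → k)} (hμ : μ ≠ 0) {q : MvPolynomial (Fin 4) k} {m : ℕ}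
    (hmd : m < d) (hq : q.IsHomogeneous m) (hdvd : ¬ linForm μ ∣ q) (hAμ : ∀ i ∈ A, μ (p i) = 0)
    (hAq : ∀ i ∈ A, eval (p i) q = 0) : 2 * #A ≤ m * d + 1 := by
  by_contra! hcard
  obtain ⟨w, hw0, hw⟩ := exists_isTangentRelation_of_plane_curve (κ := A) (p := fun i => p i)
    hμ hq hdvd hmd hd (fun i => h.ne_zero i) (fun i => hAμ i i.2) (fun i => hAq i i.2)
    (by rwa [Fintype.card_coe])
  have hA := Subtype.val_injective (p := (· ∈ A))
  obtain ⟨i, hi⟩ := h.exists_apply_ne_zero μ hμ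
  have hv0 := h.eq_zero_of_apply_eq_zero _ ((isTangentRelation_extend_iff hA).2 hw) i
    (Function.extend_apply' _ _ _ fun ⟨j, hj⟩ => hi (hj ▸ hAμ j j.2))
  exact hw0 (funext fun j => by simpa [hA.extend_apply] using congrFun hv0 j)

lemma IsMinimalConfiguration.two_mul_card_le_of_line [Infinite k]
    (h : IsMinimalConfiguration d p) (hd : (d : k) ≠ 0) (hd1 : 1 < d)
    {L : Submodule k (Fin 4 → k)} (hL : finrank k L ≤ 2) (hA : ∀ i ∈ A, p i ∈ L) :
    2 * #A ≤ d + 1 := by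
  let Z (_ : ι) : Jet k 4 := ⟨0, 0⟩
  obtain ⟨μ, hμ, hLμ, -⟩ := exists_dual_degIn_ker_eq p Z (by omega : finrank k L < 4)
  obtain ⟨ν, hν, hLν, -⟩ := exists_plane_through_line p Z hL μ
  simpa using h.two_mul_card_le_of_plane_curve hd hμ hd1 (isHomogeneous_linForm ν)
    (hν ∘ mem_span_singleton_of_linForm_dvd) (fun i hi => hLμ (hA i hi))
    (fun i hi => by simpa using hLν (hA i hi))

variable {l : Dual k (Fin 4 → k)} {e : ℕ}

lemma IsMaxHyperplane.two_mul_deg_residual_le (hl : IsMaxHyperplane l p Z)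
    (h : ¬ IsNonplanar p (residual (linForm l) p Z)) :
    2 * deg (residual (linForm l) p Z) ≤ deg Z := by
  obtain ⟨l', hl', hdeg⟩ := exists_degIn_ker_eq_deg_of_not_isNonplanar h
  have hres := degIn_residual_le (ker l') p Z (linForm l)
  have hmax := hl.degIn_le l' hl'
  have hsplit := deg_residual_linForm_add_degIn p Z l
  omega

variable [CharZero k]

lemma IsMinimalConfiguration.two_mul_card_le_of_residual_on_line
    (h : IsMinimalConfiguration (e + 3) p) (hv : IsAdmissible p Z)
    (hr : IsRelation (e + 3) p Z) (hZ : ∀ i, 1 ≤ (Z i).deg) (hl : l ≠ 0)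
    {L : Submodule k (Fin 4 → k)} (hL : finrank k L ≤ 2)
    (hLdeg : degIn L p (residual (linForm l) p Z) = deg (residual (linForm l) p Z))
    (hpos : 0 < deg (residual (linForm l) p Z)) (hdeg : 2 * deg Z ≤ 7 * e + 20) :
    2 * Fintype.card ι ≤ 3 * e + 10 := by
  classical
  have hd : ((e + 3 : ℕ) : k) ≠ 0 := Nat.cast_ne_zero.2 (by omega)
  let B : Finset ι := {i | p i ∈ L}
  have hB : 2 * #B ≤ e + 3 + 1 :=
    h.two_mul_card_le_of_line hd (by omega) hL fun i hi => (mem_filter.1 hi).2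
  obtain ⟨N, -, -, hdegN, hN⟩ := exists_dual_degIn_ker_eq_forall_ne_zero p
    (residual (linForm l) p Z) (by omega : finrank k L < 4) (Bᶜ.image p) (by simp [B])
  have hNZ : e + 4 ≤ degIn (ker N) p Z :=
    calc e + 4 ≤ deg (residual (linForm l) p Z) := add_two_le_deg_of_isRelation (by norm_num)
          (hv.residual _) (hr.residual (m := 1) (isHomogeneous_linForm l)) hpos
      _ = degIn (ker N) p (residual (linForm l) p Z) := by rw [hdegN, hLdeg]
      _ ≤ degIn (ker N) p Z := degIn_residual_le _ _ _ _
  have hresN := deg_residual_linForm_add_degIn p Z N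
  obtain ⟨q, hq, hdvd, hqZ⟩ := exists_quadric_deg_residual_eq_zero hl (hv.residual (linForm N))
    (hr.residual (m := 1) (isHomogeneous_linForm N)) (by omega)
  have hBl (i) (hi : i ∈ Bᶜ) : l (p i) = 0 := by
    have hnot : p i ∉ L := by simpa [B] using hi
    have hzero : ((Z i).residual (linForm l) (p i)).deg = 0 :=
      (degIn_eq_deg_iff.1 hLdeg i).symm.trans (Jet.degIn_of_notMem hnot)
    simpa using Jet.eval_eq_zero_of_deg_residual_eq_zero (Nat.one_le_iff_ne_zero.1 (hZ i)) hzero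
  have hBq (i) (hi : i ∈ Bᶜ) : eval (p i) q = 0 := by
    have hsplit := (Z i).deg_residual_linForm_add_degIn N (p i)
    rw [Jet.degIn_of_notMem (L := ker N) (hN _ (mem_image_of_mem p hi))] at hsplit
    have hZi := hZ i
    have hNi : ((Z i).residual (linForm N) (p i)).deg ≠ 0 := by omega
    exact Jet.eval_eq_zero_of_deg_residual_eq_zero hNi (deg_eq_zero_iff.1 hqZ i)
  have hBc := h.two_mul_card_le_of_plane_curve hd hl (by omega) hq hdvd hBl hBq
  have hcard := card_add_card_compl B
  omega

lemma IsMinimalConfiguration.isNonplanar_residual (h : IsMinimalConfiguration (e + 3) p)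
    (hv : IsAdmissible p Z) (hr : IsRelation (e + 3) p Z) (hZ : ∀ i, 1 ≤ (Z i).deg)
    (hnp : IsNonplanar p Z) (hl : IsMaxHyperplane l p Z) (hdeg : 2 * deg Z ≤ 7 * e + 20)
    (hcard : 3 * e + 10 < 2 * Fintype.card ι) :
    IsNonplanar p (residual (linForm l) p Z) := by
  by_contra hplanar
  have hhalf := hl.two_mul_deg_residual_le hplanar
  obtain ⟨L, hL, hLdeg⟩ := exists_line_of_isRelation (by norm_num) (hv.residual (linForm l))
    (hr.residual (m := 1) (isHomogeneous_linForm l)) (by omega)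
  have hpos : 0 < deg (residual (linForm l) p Z) := by
    have hlt := hnp l hl.ne_zero
    have hsplit := deg_residual_linForm_add_degIn p Z l
    omega
  exact hcard.not_ge
    (h.two_mul_card_le_of_residual_on_line hv hr hZ hl.ne_zero hL hLdeg hpos hdeg)

end Minimal

/-! ### Minimal configurations lie on twisted cubics -/

section Forward

variable {k : Type*} [Field k] {ι : Type*} [Fintype ι]

lemma deg_le_mul_card {n m : ℕ} {Z : ι → Jet k n} {T : Finset ι} (h : ∀ i ∈ T, (Z i).deg ≤ m)
    (h' : ∀ i ∉ T, (Z i).deg = 0) : deg Z ≤ m * #T := by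
  rw [deg, ← sum_subset (subset_univ T) fun i _ => h' i, mul_comm]
  exact sum_le_card_nsmul _ _ _ h

lemma deg_le_two_mul_card {n : ℕ} {Z : ι → Jet k n} : deg Z ≤ 2 * Fintype.card ι :=
  deg_le_mul_card (fun i _ => (Z i).deg_le_two) (by simp)

lemma exists_ne_zero_sum_eval_eq_zero {n r : ℕ} [Nonempty ι] {p : ι → Fin n → k}
    (h : ∀ i, ∀ G : MvPolynomial (Fin n) k, G.IsHomogeneous r →
      (∀ j, j ≠ i → eval (p j) G = 0) → eval (p i) G = 0) :
    ∃ c : ι → k, c ≠ 0 ∧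
      ∀ F : MvPolynomial (Fin n) k, F.IsHomogeneous r → ∑ i, c i * eval (p i) F = 0 := by
  classical
  let φ : homogeneousSubmodule (Fin n) k r →ₗ[k] ι → k :=
    LinearMap.pi fun i => evalLM k (p i) ∘ₗ Submodule.subtype _
  have hφ (F : homogeneousSubmodule (Fin n) k r) (i : ι) : φ F i = eval (p i) F.1 := by
    simp [φ, evalLM, aeval_eq_eval]
  have hrange : LinearMap.range φ ≠ ⊤ := fun htop => by
    obtain ⟨i⟩ := ‹Nonempty ι›
    obtain ⟨G, hG⟩ := LinearMap.range_eq_top.1 htop (Pi.single i 1)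
    have hGi := h i G.1 G.2 fun j hj => by rw [← hφ, hG, Pi.single_eq_of_ne hj]
    rw [← hφ, hG, Pi.single_eq_same] at hGi
    exact one_ne_zero hGi
  obtain ⟨c, hc, hrel⟩ := exists_ne_zero_forall_dotProduct_eq_zero φ (le_refl (ker φ)) (by
    have hlt := Submodule.finrank_lt hrange
    have hrank := φ.finrank_range_add_finrank_ker
    rw [Module.finrank_fintype_fun_eq_card] at hlt
    omega)
  exact ⟨c, hc, fun F hF => by simpa only [hφ] using hrel ⟨F, hF⟩⟩

variable [Infinite k] {d e : ℕ} {p : ι → Fin 4 → k} {Z : ι → Jet k 4} {J : Finset ι}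

lemma forall_ne_zero_of_sum_eval_eq_zero (hcard : Fintype.card ι ≤ 8) (hne : ∀ i, p i ≠ 0)
    (hp : ∀ i j, i ≠ j → p j ∉ span k {p i}) (hgen : InGeneralPosition p) {c : ι → k} (hc : c ≠ 0)
    (hrel : ∀ F : MvPolynomial (Fin 4) k, F.IsHomogeneous 2 → ∑ i, c i * eval (p i) F = 0) (i : ι) :
    c i ≠ 0 := by
  classical
  let Z (i : ι) : Jet k 4 := ⟨c i, 0⟩
  have hdeg (i) : (Z i).deg ≤ 1 := Jet.deg_le_one_iff.2 rfl
  have hv : IsAdmissible p Z := ⟨hne, hp, fun i h => absurd rfl h⟩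
  have hr : IsRelation 2 p Z := fun F hF => by simpa [Z, Jet.functional_apply] using hrel F hF
  have hplane (l : Dual k (Fin 4 → k)) (hl : l ≠ 0) : degIn (ker l) p Z ≤ 3 := by
    let A : Finset ι := {i | p i ∈ ker l}
    have hA : #A ≤ 3 := by
      by_contra! hA
      obtain ⟨J, hJA, hJ⟩ := exists_subset_card_eq (Nat.succ_le_of_lt hA)
      obtain ⟨i, hi, hli⟩ := hgen l hl J hJ
      exact hli (mem_filter.1 (hJA hi)).2
    calc degIn (ker l) p Z = ∑ i ∈ A, (Z i).degIn (ker l) (p i) := .symm <|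
          sum_subset (subset_univ A) fun i _ hi => Jet.degIn_of_notMem (by simpa [A] using hi)
      _ ≤ ∑ i ∈ A, 1 := sum_le_sum fun i _ => ((Z i).degIn_le_deg _ _).trans (hdeg i)
      _ ≤ 3 := by rwa [← card_eq_sum_ones]
  have hpos : 0 < deg Z := by
    refine Nat.pos_of_ne_zero fun h0 => hc (funext fun i => ?_)
    exact (Jet.deg_eq_zero_iff.1 (deg_eq_zero_iff.1 h0 i)).1
  have hge := three_mul_add_two_le_deg hv hr hpos le_rfl hplane
  intro hi
  have hle : deg Z ≤ 1 * #(univ.erase i) := deg_le_mul_card (fun j _ => hdeg j) fun j hj => by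
    obtain rfl : j = i := by simpa using hj
    exact Jet.deg_eq_zero_iff.2 ⟨hi, rfl⟩
  rw [card_erase_of_mem (mem_univ i), card_univ] at hle
  omega

lemma exists_sum_eval_eq_zero_of_exists_quadric (hv : IsAdmissible p Z)
    (hr : IsRelation (e + 4) p Z) (hZ : ∀ i, (Z i).deg = 2) (hdeg : deg Z = 3 * e + 15)
    (hplane : ∀ l : Dual k (Fin 4 → k), l ≠ 0 → degIn (ker l) p Z ≤ 3) (hJ : #J = 8)
    {q : ι} (hq : q ∈ J) {G : MvPolynomial (Fin 4) k} (hG : G.IsHomogeneous 2)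
    (hGJ : ∀ i ∈ J, i ≠ q → eval (p i) G = 0) (hGq : eval (p q) G ≠ 0) :
    ∃ c : ι → k, (∀ i ∈ J, c i ≠ 0) ∧
      ∀ F : MvPolynomial (Fin 4) k, F.IsHomogeneous 2 → ∑ i ∈ J, c i * eval (p i) F = 0 := by
  classical
  have hplane' (l : Dual k (Fin 4 → k)) (hl : l ≠ 0) : degIn (ker l) p (residual G p Z) ≤ 3 :=
    (degIn_residual_le _ _ _ _).trans (hplane l hl)
  have hr' : IsRelation (e + 2) p (residual G p Z) := hr.residual (m := 2) hG
  have hpos : 0 < deg (residual G p Z) := Nat.pos_of_ne_zero fun h0 =>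
    hGq (Jet.eval_eq_zero_of_deg_residual_eq_zero (by simp [hZ]) (deg_eq_zero_iff.1 h0 q))
  have hge := three_mul_add_two_le_deg (hv.residual G) hr' hpos (by omega) hplane'
  have hle (i) (_ : i ∈ univ) :
      (residual G p Z i).deg + (if i ∈ J.erase q then 1 else 0) ≤ (Z i).deg := by
    split_ifs with hi
    · rw [hZ]
      have hGi := hGJ i (mem_of_mem_erase hi) (ne_of_mem_erase hi)
      exact Nat.succ_le_succ (Jet.deg_residual_le_one hGi)
    · exact (Z i).deg_residual_le G (p i)
  have hsum : ∑ i, ((residual G p Z i).deg + (if i ∈ J.erase q then 1 else 0)) =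
      deg (residual G p Z) + 7 := by
    rw [sum_add_distrib, sum_boole, filter_mem_eq_inter, univ_inter, card_erase_of_mem hq, hJ]
    rfl
  have hdegG : deg (residual G p Z) + 7 = 3 * e + 15 := by
    have := hsum ▸ sum_le_sum hle
    rw [← deg, hdeg] at this
    omega
  have heq := (sum_eq_sum_iff_of_le hle).1 (by rw [hsum, hdegG, ← hdeg, deg])
  refine exists_sum_eval_eq_zero_of_forall_degIn_le (m := e) (add_comm e 2 ▸ hr') (by omega) hplane'
    fun i _ => ?_
  have := heq i (mem_univ i)
  rw [hZ] at this
  split_ifs at this <;> omega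

lemma hasQuadricRelation_of_forall_deg_eq_two (hv : IsAdmissible p Z)
    (hr : IsRelation (e + 4) p Z) (hZ : ∀ i, (Z i).deg = 2) (hdeg : deg Z = 3 * e + 15)
    (hplane : ∀ l : Dual k (Fin 4 → k), l ≠ 0 → degIn (ker l) p Z ≤ 3) (hJ : #J = 8) :
    HasQuadricRelation p J := by
  classical
  refine .of_sum_eval_eq_zero ?_
  by_cases hsep : ∃ q ∈ J, ∃ G : MvPolynomial (Fin 4) k, G.IsHomogeneous 2 ∧
      (∀ i ∈ J, i ≠ q → eval (p i) G = 0) ∧ eval (p q) G ≠ 0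
  · obtain ⟨q, hq, G, hG, hGJ, hGq⟩ := hsep
    exact exists_sum_eval_eq_zero_of_exists_quadric hv hr hZ hdeg hplane hJ hq hG hGJ hGq
  · push Not at hsep
    have : Nonempty J := (card_pos.1 (by omega)).to_subtype
    obtain ⟨c, hc, hrel⟩ := exists_ne_zero_sum_eval_eq_zero (p := fun i : J => p i)
      fun i G hG hvan => hsep i i.2 G hG fun j hj hji =>
        hvan ⟨j, hj⟩ fun h => hji (congrArg Subtype.val h)
    have hc' := forall_ne_zero_of_sum_eval_eq_zero (p := fun i : J => p i)
      (by rw [Fintype.card_coe, hJ]) (fun i => hv.ne_zero i)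
      (fun i j hij => hv.notMem_span i j (Subtype.coe_injective.ne hij))
      (inGeneralPosition_of_forall_degIn_lt (by simp [hZ])
        fun l hl => Nat.lt_succ_of_le (hplane l hl)) hc hrel
    refine ⟨fun i => if hi : i ∈ J then c ⟨i, hi⟩ else 0, fun i hi => by simp [hi, hc'],
      fun F hF => ?_⟩
    rw [← hrel F hF, ← sum_coe_sort J]
    exact sum_congr rfl fun i _ => by simp

lemma degIn_residual_le_three (hv : IsAdmissible p Z) (hr : IsRelation (e + 3) p Z)
    (he : 2 ≤ e) (hdeg : deg Z = 3 * e + 12) {l : Dual k (Fin 4 → k)}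
    (hl : degIn (ker l) p Z = 4)
    (hplane : ∀ l : Dual k (Fin 4 → k), l ≠ 0 → degIn (ker l) p Z ≤ 4)
    {h : Dual k (Fin 4 → k)} (hh : h ≠ 0) :
    degIn (ker h) p (residual (linForm l) p Z) ≤ 3 := by
  by_contra! hgt
  have hle : degIn (ker h) p (residual (linForm l) p Z) ≤ 4 :=
    (degIn_residual_le _ _ _ _).trans (hplane h hh)
  let Z' := residual (linForm h) p (residual (linForm l) p Z)
  have hdeg' : deg Z' = 3 * e + 4 := by
    have hsplit := deg_residual_linForm_add_degIn p Z l
    have hsplit' : deg Z' + degIn (ker h) p (residual (linForm l) p Z) = _ :=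
      deg_residual_linForm_add_degIn p _ h
    omega
  have hr' : IsRelation (e + 1) p Z' := IsRelation.residual (m := 1)
    (hr.residual (e := e + 2) (m := 1) (isHomogeneous_linForm l)) (isHomogeneous_linForm h)
  obtain ⟨l', hl'⟩ := exists_isMaxHyperplane (by norm_num) p Z'
  have hl'4 : degIn (ker l') p Z' ≤ 4 :=
    ((degIn_residual_le _ _ _ _).trans (degIn_residual_le _ _ _ _)).trans (hplane l' hl'.ne_zero)
  have hnp : IsNonplanar p Z' := fun l'' hl'' => by
    have := hl'.degIn_le l'' hl''
    omega
  have := (hl'.degIn_bounds ((hv.residual _).residual _) hr' hnp (by omega)).1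
  omega

-- The residual scheme of `l` has minimal degree, so it lies on a twisted cubic; a quadric through
-- the cubic leaves nothing of it, hence nothing of `Z`, and so the cubic contains all the points.
lemma exists_isOnRNC_of_degIn_eq_four (hv : IsAdmissible p Z) (hr : IsRelation (e + 3) p Z)
    (he : 3 ≤ e) (hZ : ∀ i, 1 ≤ (Z i).deg) (hdeg : deg Z = 3 * e + 12)
    (hcard : Fintype.card ι < 3 * e + 2) {l : Dual k (Fin 4 → k)}
    (hl : degIn (ker l) p Z = 4)
    (hplane : ∀ l : Dual k (Fin 4 → k), l ≠ 0 → degIn (ker l) p Z ≤ 4) :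
    ∃ g : (Fin 4 → k) ≃ₗ[k] (Fin 4 → k), ∀ i, IsOnRNC g (p i) := by
  let Z' := residual (linForm l) p Z
  have hdeg' : deg Z' + degIn (ker l) p Z = deg Z := deg_residual_linForm_add_degIn p Z l
  have hr' : IsRelation (2 + e) p Z' :=
    add_comm e 2 ▸ hr.residual (e := e + 2) (m := 1) (isHomogeneous_linForm l)
  have hplane' (h : Dual k (Fin 4 → k)) (hh : h ≠ 0) : degIn (ker h) p Z' ≤ 3 :=
    degIn_residual_le_three hv hr (by omega) hdeg hl hplane hh
  let T : Finset ι := {i | 1 ≤ (Z' i).deg}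
  have hT : ∀ i ∈ T, 1 ≤ (Z' i).deg := fun i hi => (mem_filter.1 hi).2
  have hTc : ∀ i ∉ T, (Z' i).deg = 0 := fun i hi => by simpa [T] using hi
  have hTcard : deg Z' ≤ 2 * #T := deg_le_mul_card (fun i _ => (Z' i).deg_le_two) hTc
  obtain ⟨g, hg⟩ := exists_isOnRNC_of_forall_degIn_le (by omega) hT hplane' fun J hJT hJ =>
    .of_sum_eval_eq_zero (exists_sum_eval_eq_zero_of_forall_degIn_le hr' (by omega) hplane'
      fun i hi => hT i (hJT hi))
  refine ⟨g, fun i => isOnRNC_of_forall_eval_rncQuadric_eq_zero (hv.ne_zero i)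
    fun a b c f habcf => ?_⟩
  set Q := rncQuadric g a b c f
  have hQ : Q.IsHomogeneous 2 := isHomogeneous_rncQuadric g a b c f
  have hQT : deg (residual Q p Z') ≤ 1 * #T := deg_le_mul_card
    (fun i hi => Jet.deg_residual_le_one ((hg i hi).eval_rncQuadric_eq_zero habcf))
    fun i hi => Nat.eq_zero_of_le_zero (hTc i hi ▸ (Z' i).deg_residual_le Q (p i))
  have hQZ' : deg (residual Q p Z') = 0 := by
    by_contra hne
    have hge : 3 * e + 2 ≤ deg (residual Q p Z') := three_mul_add_two_le_deg
      ((hv.residual _).residual Q) (IsRelation.residual (m := 2) (add_comm 2 e ▸ hr') hQ)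
      (Nat.pos_of_ne_zero hne) (by omega)
      fun h hh => (degIn_residual_le _ _ _ _).trans (hplane' h hh)
    have := card_le_univ T
    omega
  have hQZ : deg (residual Q p Z) = 0 :=
    deg_residual_eq_zero_of_residual_linForm (e := e + 1) (by norm_num) hv hr hQ hQZ' (by omega)
  exact Jet.eval_eq_zero_of_deg_residual_eq_zero (by have := hZ i; omega)
    (deg_eq_zero_iff.1 hQZ i)

lemma exists_isOnRNC_of_forall_degIn_le_three (hv : IsAdmissible p Z)
    (hr : IsRelation (e + 4) p Z) (hZ : ∀ i, 1 ≤ (Z i).deg)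
    (hcard : 9 ≤ Fintype.card ι) (hcard' : 2 * Fintype.card ι ≤ 3 * e + 15)
    (hplane : ∀ l : Dual k (Fin 4 → k), l ≠ 0 → degIn (ker l) p Z ≤ 3) :
    ∃ g : (Fin 4 → k) ≃ₗ[k] (Fin 4 → k), ∀ i, IsOnRNC g (p i) := by
  obtain ⟨i₀⟩ := Fintype.card_pos_iff.1 (by omega : 0 < Fintype.card ι)
  have hpos : 0 < deg Z := (hZ i₀).trans
    (single_le_sum (f := fun i => (Z i).deg) (fun _ _ => Nat.zero_le _) (mem_univ i₀))
  have hge := three_mul_add_two_le_deg hv hr hpos (by omega) hplane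
  have hle : deg Z ≤ 2 * Fintype.card ι := deg_le_two_mul_card
  obtain ⟨g, hg⟩ := exists_isOnRNC_of_forall_degIn_le (T := univ) hcard (fun i _ => hZ i) hplane
    fun J _ hJ => by
      obtain hdeg | hdeg : deg Z = 3 * e + 14 ∨ deg Z = 3 * e + 15 := by omega
      · exact .of_sum_eval_eq_zero (exists_sum_eval_eq_zero_of_forall_degIn_le (m := e + 2)
          (by rwa [show 2 + (e + 2) = e + 4 by omega]) (by omega) hplane fun i _ => hZ i)
      · have heq : ∀ i ∈ univ, (Z i).deg = 2 := (sum_eq_sum_iff_of_le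
          fun i _ => (Z i).deg_le_two).1 (by
            rw [← deg, sum_const, card_univ, smul_eq_mul]
            omega)
        exact hasQuadricRelation_of_forall_deg_eq_two hv hr (fun i => heq i (mem_univ i)) hdeg
          hplane hJ
  exact ⟨g, fun i => hg i (mem_univ i)⟩

end Forward

section Main

variable {k : Type*} [Field k] {ι : Type*} [Fintype ι] {d e : ℕ}
  {p w : ι → Fin 4 → k} {Z : ι → Jet k 4}

lemma IsMinimalConfiguration.isNonplanar (h : IsMinimalConfiguration d p)
    (hZ : ∀ i, 1 ≤ (Z i).deg) : IsNonplanar p Z := by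
  by_contra hnp
  obtain ⟨l, hl, hldeg⟩ := exists_degIn_ker_eq_deg_of_not_isNonplanar hnp
  obtain ⟨i, hi⟩ := h.exists_apply_ne_zero l hl
  have hZi := hZ i
  have hdegi := degIn_eq_deg_iff.1 hldeg i
  exact hi (Jet.mem_of_degIn_ne_zero (z := Z i) (L := ker l) (by omega))

lemma IsMaxHyperplane.three_mul_add_two_le_deg_residual [Infinite k] {l : Dual k (Fin 4 → k)}
    (hl : IsMaxHyperplane l p Z) (hv : IsAdmissible p Z) (hr : IsRelation (e + 1) p Z)
    (he : 3 ≤ e) (hnp : IsNonplanar p (residual (linForm l) p Z)) (hdeg : deg Z ≤ 3 * e + 6) :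
    3 * e + 2 ≤ deg (residual (linForm l) p Z) := by
  by_contra! hlt
  obtain ⟨l', hl'⟩ := exists_isMaxHyperplane (by norm_num) p (residual (linForm l) p Z)
  have hr' := hr.residual (m := 1) (isHomogeneous_linForm l)
  have hge := hl'.add_three_le_degIn (hv.residual _) hr' hnp he (by omega)
  have hle' := (hl'.degIn_bounds (hv.residual _) hr' hnp (by omega)).2
  have hle := (degIn_residual_le (ker l') p Z (linForm l)).trans (hl.degIn_le l' hl'.ne_zero)
  have hsplit := deg_residual_linForm_add_degIn p Z l
  omega

theorem IsMinimalConfiguration.exists_isOnRNC [CharZero k] (h : IsMinimalConfiguration d p)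
    (hd : 7 ≤ d) (hcard : Fintype.card ι = 1 + (3 * d + 1) / 2) (hw : IsTangentRelation d p w)
    (hw0 : w ≠ 0) :
    ∃ g : (Fin 4 → k) ≃ₗ[k] (Fin 4 → k), ∀ i, IsOnRNC g (p i) := by
  obtain ⟨Z, hv, hr, hZw⟩ :=
    hw.exists_isRelation (Nat.cast_ne_zero.2 (by omega)) h.ne_zero h.notMem_span
  have hZ (i : ι) : 1 ≤ (Z i).deg := Nat.one_le_iff_ne_zero.2 fun h0 =>
    hw0 (h.eq_zero_of_apply_eq_zero w hw i (hZw i h0))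
  have hle : deg Z ≤ 2 * Fintype.card ι := deg_le_two_mul_card
  obtain ⟨l, hl⟩ := exists_isMaxHyperplane (by norm_num) p Z
  obtain ⟨e, rfl⟩ := Nat.exists_eq_add_of_le' hd
  have hres := hl.three_mul_add_two_le_deg_residual (e := e + 6) hv hr (by omega)
    (h.isNonplanar_residual hv hr hZ (h.isNonplanar hZ) hl (by omega) (by omega)) (by omega)
  have hsplit := deg_residual_linForm_add_degIn p Z l
  obtain hl3 | hl4 := Nat.lt_or_ge (degIn (ker l) p Z) 4
  · exact exists_isOnRNC_of_forall_degIn_le_three (e := e + 3) hv hr hZ (by omega) (by omega)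
      fun l' hl' => (hl.degIn_le l' hl').trans (Nat.le_of_lt_succ hl3)
  · have hl4 : degIn (ker l) p Z = 4 := by omega
    exact exists_isOnRNC_of_degIn_eq_four (e := e + 4) hv hr (by omega) hZ (by omega) (by omega)
      hl4 fun l' hl' => (hl.degIn_le l' hl').trans_eq hl4

end Main

/-! ### The minimally Terracini locus in terms of tangent relations -/

section Locus

variable {k : Type*} [Field k]

/-- The gradients of a form of degree `d` at the points `p i`. -/
def gradients {ι : Type*} {n : ℕ} (d : ℕ) (p : ι → Fin n → k) :
    homogeneousSubmodule (Fin n) k d →ₗ[k] ι × Fin n → k :=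
  LinearMap.pi fun x =>
    evalLM k (p x.1) ∘ₗ (pderiv x.2).toLinearMap ∘ₗ (homogeneousSubmodule (Fin n) k d).subtype

/-- The double points at the `p i` impose independent conditions on forms of degree `d`; when `d`
is nonzero in `k`, this is the vanishing of `h¹`, see `h1_eq_zero_iff`. -/
def ImposeIndependentConditions {ι : Type*} [Fintype ι] {n : ℕ} (d : ℕ) (p : ι → Fin n → k) :
    Prop :=
  ∀ w, IsTangentRelation d p w → w = 0

section Gradients

variable {ι : Type*} {n d : ℕ} {p : ι → Fin n → k}

lemma gradients_apply (F : homogeneousSubmodule (Fin n) k d) (x : ι × Fin n) :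
    gradients d p F x = eval (p x.1) (pderiv x.2 F.1) := by
  simp [gradients, evalLM, aeval_eq_eval]

lemma sum_mul_gradients [Fintype ι] (w : ι → Fin n → k) (F : homogeneousSubmodule (Fin n) k d) :
    ∑ x : ι × Fin n, w x.1 x.2 * gradients d p F x = ∑ i, dirDeriv (p i) (w i) F.1 := by
  simp only [Fintype.sum_prod_type, gradients_apply, dirDeriv_apply]

theorem imposeIndependentConditions_iff_surjective_gradients [Fintype ι] :
    ImposeIndependentConditions d p ↔ Function.Surjective (gradients d p) := by
  classical
  refine ⟨fun h => ?_, fun h w hw => ?_⟩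
  · by_contra hsurj
    have hlt := Submodule.finrank_lt (mt LinearMap.range_eq_top.1 hsurj)
    have hrank := LinearMap.finrank_range_add_finrank_ker (gradients d p)
    rw [Module.finrank_fintype_fun_eq_card] at hlt
    obtain ⟨c, hc, hrel⟩ :=
      exists_ne_zero_forall_dotProduct_eq_zero (gradients d p) le_rfl (by omega)
    have hc' := h (Function.curry c) fun F hF => by
      rw [← sum_mul_gradients (Function.curry c) ⟨F, hF⟩]
      exact hrel ⟨F, hF⟩
    exact hc (funext fun x => congrFun (congrFun hc' x.1) x.2)
  · ext i j
    obtain ⟨F, hF⟩ := h (Pi.single (i, j) 1)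
    simpa [← sum_mul_gradients, hF, Pi.single_apply] using hw F.1 F.2

end Gradients

section Cohomology

variable {n d : ℕ}

lemma mem_doubleVanishing_iff (hd : (d : k) ≠ 0) {F : MvPolynomial (Fin n) k}
    (hF : F.IsHomogeneous d) (v : Fin n → k) :
    F ∈ doubleVanishing k v ↔ ∀ j, eval v (pderiv j F) = 0 := by
  have heuler : (∀ j, eval v (pderiv j F) = 0) → eval v F = 0 := fun h => by
    have h0 := dirDeriv_self hF v
    simpa [dirDeriv_apply, h, hd] using h0
  simpa [doubleVanishing, evalLM, aeval_eq_eval] using heuler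

lemma h0_eq_finrank_ker_gradients (hd : (d : k) ≠ 0) (S : Finset (ProjSpace k n)) :
    h0 k n d S = finrank k (ker (gradients d fun q : S => q.1.rep)) := by
  suffices h : homogeneousSubmodule (Fin (n + 1)) k d ⊓ ⨅ p ∈ S, doubleVanishing k p.rep =
      (ker (gradients d fun q : S => q.1.rep)).map (homogeneousSubmodule _ k d).subtype by
    rw [h0, h, Submodule.finrank_map_subtype_eq]
  ext F
  by_cases hF : F.IsHomogeneous d
  · simp [hF, mem_doubleVanishing_iff hd hF, funext_iff, gradients_apply]
  · simp [hF]

lemma h1_add_finrank_range_gradients (hd : (d : k) ≠ 0) (S : Finset (ProjSpace k n)) :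
    h1 k n d S + finrank k (LinearMap.range (gradients d fun q : S => q.1.rep)) =
      finrank k (S × Fin (n + 1) → k) := by
  have hrank := LinearMap.finrank_range_add_finrank_ker (gradients d fun q : S => q.1.rep)
  rw [finrank_homogeneousSubmodule] at hrank
  rw [h1, h0_eq_finrank_ker_gradients hd, ← hrank, Module.finrank_fintype_fun_eq_card,
    Fintype.card_prod, Fintype.card_coe, Fintype.card_fin]
  push_cast
  ring

lemma h1_nonneg (hd : (d : k) ≠ 0) (S : Finset (ProjSpace k n)) : 0 ≤ h1 k n d S := by
  have h := h1_add_finrank_range_gradients hd S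
  have hle := (LinearMap.range (gradients d fun q : S => q.1.rep)).finrank_le
  omega

theorem h1_eq_zero_iff (hd : (d : k) ≠ 0) (S : Finset (ProjSpace k n)) :
    h1 k n d S = 0 ↔ ImposeIndependentConditions d fun q : S => q.1.rep := by
  have h := h1_add_finrank_range_gradients hd S
  rw [imposeIndependentConditions_iff_surjective_gradients, ← LinearMap.range_eq_top]
  refine ⟨fun h0 => Submodule.eq_top_of_finrank_eq (by omega), fun htop => ?_⟩
  rw [htop, finrank_top] at h
  omega

end Cohomology

section Points

variable {n : ℕ}

lemma rep_notMem_span_rep {a b : ProjSpace k n} (h : a ≠ b) : b.rep ∉ span k {a.rep} := by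
  intro hmem
  obtain ⟨c, hc⟩ := Submodule.mem_span_singleton.1 hmem
  exact h.symm (by rw [← a.mk_rep, ← b.mk_rep, Projectivization.mk_eq_mk_iff']; exact ⟨c, hc⟩)

lemma spans_iff_exists_apply_rep_ne_zero (S : Finset (ProjSpace k n)) :
    Spans k n S ↔ ∀ l : Dual k (Fin (n + 1) → k), l ≠ 0 → ∃ q : S, l q.1.rep ≠ 0 := by
  refine ⟨fun h l hl => ?_, fun h => ?_⟩
  · by_contra! hzero
    exact hl (LinearMap.ext_on h (by rintro _ ⟨q, hq, rfl⟩; exact hzero ⟨q, hq⟩))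
  · by_contra hne
    obtain ⟨l, hl, hle⟩ := Submodule.exists_le_ker_of_lt_top _ (lt_top_iff_ne_top.2 hne)
    obtain ⟨q, hq⟩ := h l hl
    exact hq (hle (Submodule.subset_span ⟨q.1, q.2, rfl⟩))

lemma submodule_eq_span_singleton_iff (q : ProjSpace k n) (v : Fin (n + 1) → k) :
    q.submodule = span k {v} ↔ ∃ c : k, c ≠ 0 ∧ q.rep = c • v := by
  rw [Projectivization.submodule_eq, eq_comm, Submodule.span_singleton_eq_span_singleton]
  exact ⟨fun ⟨u, hu⟩ => ⟨u, u.ne_zero, hu.symm⟩, fun ⟨c, hc, h⟩ => ⟨Units.mk0 c hc, h.symm⟩⟩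

lemma exists_isRNC_iff (S : Finset (ProjSpace k n)) :
    (∃ C, IsRNC k n C ∧ ↑S ⊆ C) ↔ ∃ g, ∀ q : S, IsOnRNC g q.1.rep := by
  simp only [IsOnRNC]
  constructor
  · rintro ⟨_, ⟨g, rfl⟩, hS⟩
    refine ⟨g, fun q => ?_⟩
    obtain ⟨s, t, hst, hq⟩ := hS q.2
    obtain ⟨c, hc, hrep⟩ := (submodule_eq_span_singleton_iff _ _).1 hq
    exact ⟨s, t, c, hc, hst, hrep⟩
  · rintro ⟨g, hg⟩
    refine ⟨_, ⟨g, rfl⟩, fun q hq => ?_⟩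
    obtain ⟨s, t, c, hc, hst, hrep⟩ := hg ⟨q, hq⟩
    exact ⟨s, t, hst, (submodule_eq_span_singleton_iff _ _).2 ⟨c, hc, hrep⟩⟩

end Points

lemma eq_zero_of_isTangentRelation_of_apply_eq_zero {n d : ℕ} (hd : (d : k) ≠ 0)
    {S : Finset (ProjSpace k n)} (h : ∀ A ⊂ S, h1 k n d A = 0) {w : S → Fin (n + 1) → k}
    (hw : IsTangentRelation d (fun q : S => q.1.rep) w) {q : S} (hq : w q = 0) : w = 0 := by
  classical
  let incl : S.erase q.1 → S := Set.inclusion (erase_subset q.1 S)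
  have hincl : incl.Injective := Set.inclusion_injective _
  have hext : Function.extend incl (w ∘ incl) 0 = w := by
    ext1 r
    by_cases hr : r = q
    · rw [hr, hq, Function.extend_apply', Pi.zero_apply]
      exact fun ⟨a, ha⟩ => ne_of_mem_erase a.2 (congrArg Subtype.val ha)
    · exact hincl.extend_apply _ _ ⟨r, mem_erase.2 ⟨Subtype.coe_ne_coe.2 hr, r.2⟩⟩
  rw [← hext, isTangentRelation_extend_iff hincl] at hw
  rw [← hext, (h1_eq_zero_iff hd _).1 (h _ (erase_ssubset q.2)) _ hw]
  exact Function.extend_const _ 0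

lemma isMinimalConfiguration_rep {n d x : ℕ} (hd : (d : k) ≠ 0) {S : Finset (ProjSpace k n)}
    (hS : S ∈ minTerracini k n d x) : IsMinimalConfiguration d fun q : S => q.1.rep :=
  ⟨fun q => q.1.rep_nonzero, fun _ _ hne => rep_notMem_span_rep (Subtype.coe_ne_coe.2 hne),
    (spans_iff_exists_apply_rep_ne_zero S).1 hS.1.2.1,
    fun _ hw _ => eq_zero_of_isTangentRelation_of_apply_eq_zero hd hS.2 hw⟩

end Locus

/-! ### Independence of conditions under maps -/

section Maps

variable {k : Type*} [Field k] {ι : Type*} [Fintype ι] {m n d : ℕ}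

lemma eval_bind₁ (r : Fin n → k) (Φ : Fin m → MvPolynomial (Fin n) k)
    (F : MvPolynomial (Fin m) k) : eval r (bind₁ Φ F) = eval (fun j => eval r (Φ j)) F := by
  simpa only [aeval_eq_eval] using aeval_bind₁ r Φ F

lemma dirDeriv_bind₁ (r v : Fin n → k) (Φ : Fin m → MvPolynomial (Fin n) k)
    (F : MvPolynomial (Fin m) k) :
    dirDeriv r v (bind₁ Φ F) =
      dirDeriv (fun j => eval r (Φ j)) (fun j => dirDeriv r v (Φ j)) F := by
  induction F using MvPolynomial.induction_on with
  | C a => simp only [bind₁_C_right, dirDeriv_C]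
  | add F G hF hG => simp only [map_add, hF, hG]
  | mul_X F i hF => rw [map_mul, dirDeriv_mul, dirDeriv_mul, hF, bind₁_X_right, eval_bind₁,
      dirDeriv_X, eval_X]

lemma IsTangentRelation.map {p w : ι → Fin n → k} (h : IsTangentRelation d p w)
    (g : (Fin n → k) →ₗ[k] (Fin m → k)) :
    IsTangentRelation d (fun i => g (p i)) fun i => g (w i) := fun F hF => by
  let Φ : Fin m → MvPolynomial (Fin n) k := fun j => linForm (LinearMap.proj j ∘ₗ g)
  have hΦ : (bind₁ Φ F).IsHomogeneous d :=
    one_mul d ▸ hF.aeval Φ fun j => isHomogeneous_linForm _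
  simpa only [dirDeriv_bind₁, Φ, eval_linForm, dirDeriv_linForm, LinearMap.comp_apply,
    LinearMap.proj_apply] using h _ hΦ

lemma ImposeIndependentConditions.map_equiv {p : ι → Fin n → k}
    (h : ImposeIndependentConditions d p) (g : (Fin n → k) ≃ₗ[k] (Fin m → k)) :
    ImposeIndependentConditions d fun i => g (p i) := fun w hw => by
  have hw' := h _ (by simpa using hw.map g.symm.toLinearMap)
  exact funext fun i => by simpa using congrFun hw' i

lemma eval_smul_of_isHomogeneous {F : MvPolynomial (Fin n) k} (hF : F.IsHomogeneous d) (c : k)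
    (p : Fin n → k) : eval (c • p) F = c ^ d * eval p F := by
  simp only [eval_eq', mul_sum, Pi.smul_apply, smul_eq_mul, mul_pow, prod_mul_distrib]
  refine sum_congr rfl fun s hs => ?_
  have hdeg : ∑ i, s i = d := by
    simpa [Finsupp.weight_apply, Finsupp.sum_fintype] using hF (mem_support_iff.1 hs)
  rw [prod_pow_eq_pow_sum, hdeg]
  ring

lemma dirDeriv_smul_of_isHomogeneous {F : MvPolynomial (Fin n) k} (hF : F.IsHomogeneous d) (c : k)
    (p w : Fin n → k) : dirDeriv (c • p) w F = c ^ (d - 1) * dirDeriv p w F := by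
  simp only [dirDeriv_apply, eval_smul_of_isHomogeneous hF.pderiv, mul_sum]
  exact sum_congr rfl fun j _ => by ring

lemma ImposeIndependentConditions.smul {p : ι → Fin n → k}
    (h : ImposeIndependentConditions d p) {c : ι → k} (hc : ∀ i, c i ≠ 0) :
    ImposeIndependentConditions d fun i => c i • p i := fun w hw => by
  have hw' := h (fun i => c i ^ (d - 1) • w i) fun F hF => by
    simpa [dirDeriv_smul_of_isHomogeneous hF] using hw F hF
  exact funext fun i => by simpa [hc] using congrFun hw' i

lemma imposeIndependentConditions_smul_map_iff {p : ι → Fin n → k} {c : ι → k} (hc : ∀ i, c i ≠ 0)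
    (g : (Fin n → k) ≃ₗ[k] (Fin n → k)) :
    (ImposeIndependentConditions d fun i => c i • g (p i)) ↔ ImposeIndependentConditions d p := by
  refine ⟨fun h => ?_, fun h => (h.map_equiv g).smul hc⟩
  simpa [hc] using (h.smul fun i => inv_ne_zero (hc i)).map_equiv g.symm

lemma ImposeIndependentConditions.mul_card_le {p : ι → Fin (m + 1) → k}
    (h : ImposeIndependentConditions d p) :
    (m + 1) * Fintype.card ι ≤ (m + d).choose m := by
  have hle := LinearMap.finrank_le_finrank_of_surjective
    (imposeIndependentConditions_iff_surjective_gradients.1 h)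
  rwa [finrank_homogeneousSubmodule, Module.finrank_fintype_fun_eq_card, Fintype.card_prod,
    Fintype.card_fin, mul_comm] at hle

end Maps

/-! ### Double points on rational normal curves -/

section RationalNormalCurve

variable {k : Type*} [Field k] {ι : Type*} [Fintype ι] {d : ℕ}

-- On `P¹` a relation of degree `e` is carried by a scheme of degree at least `e + 2`.
lemma imposeIndependentConditions_binary_iff [CharZero k] (hd : d ≠ 0) {r : ι → Fin 2 → k}
    (hr : ∀ i, r i ≠ 0) (hspan : ∀ i j, i ≠ j → r j ∉ span k {r i}) :
    ImposeIndependentConditions d r ↔ 2 * Fintype.card ι ≤ d + 1 := by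
  refine ⟨fun h => ?_, fun h v hv => ?_⟩
  · simpa [add_comm] using h.mul_card_le
  · obtain ⟨Z, hadm, hrel, hZ⟩ := hv.exists_isRelation (Nat.cast_ne_zero.2 hd) hr hspan
    have hdeg : deg Z = 0 := by
      by_contra hne
      have := add_two_le_deg_of_isRelation le_rfl hadm hrel (Nat.pos_of_ne_zero hne)
      have := deg_le_two_mul_card (Z := Z)
      omega
    exact funext fun i => hZ i (deg_eq_zero_iff.1 hdeg i)

/-- The monomials `X 0 ^ (N - j) * X 1 ^ j` parametrizing the rational normal curve. -/
def rncMonomial (N : ℕ) (j : Fin (N + 1)) : MvPolynomial (Fin 2) k :=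
  X 0 ^ (N - j : ℕ) * X 1 ^ (j : ℕ)

/-- The differential at `r`, applied to `v`, of the parametrization of the rational normal
curve. -/
def rncDifferential (N : ℕ) (r v : Fin 2 → k) (j : Fin (N + 1)) : k :=
  dirDeriv r v (rncMonomial N j)

variable {N : ℕ}

lemma isHomogeneous_rncMonomial (j : Fin (N + 1)) :
    (rncMonomial N j : MvPolynomial (Fin 2) k).IsHomogeneous N := by
  have h := ((isHomogeneous_X k (0 : Fin 2)).pow (N - j)).mul ((isHomogeneous_X k 1).pow j)
  rwa [one_mul, one_mul, Nat.sub_add_cancel j.is_le] at h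

lemma eval_rncMonomial (r : Fin 2 → k) (j : Fin (N + 1)) :
    eval r (rncMonomial N j) = stdRNCvec k N (r 0) (r 1) j := by
  simp [rncMonomial, stdRNCvec]

lemma rncDifferential_apply (r v : Fin 2 → k) (j : Fin (N + 1)) :
    rncDifferential N r v j = v 0 * ((N - j : ℕ) * r 0 ^ (N - j - 1 : ℕ) * r 1 ^ (j : ℕ)) +
      v 1 * (r 0 ^ (N - j : ℕ) * (j * r 1 ^ (j - 1 : ℕ))) := by
  simp only [rncDifferential, dirDeriv_apply, rncMonomial, Fin.sum_univ_two]
  simp only [pderiv_mul, pderiv_pow, pderiv_X, map_add, map_mul, map_pow, map_natCast, eval_X]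
  simp

lemma rncDifferential_zero (r : Fin 2 → k) : rncDifferential N r 0 = 0 := by
  ext j
  simp only [rncDifferential, map_zero, LinearMap.zero_apply, Pi.zero_apply]

lemma dirDeriv_bind₁_rncMonomial (r v : Fin 2 → k) (F : MvPolynomial (Fin (N + 1)) k) :
    dirDeriv r v (bind₁ (rncMonomial N) F) =
      dirDeriv (stdRNCvec k N (r 0) (r 1)) (rncDifferential N r v) F := by
  rw [dirDeriv_bind₁, funext (eval_rncMonomial r)]
  rfl

lemma exists_bind₁_rncMonomial_eq_monomial (d a b : ℕ) (h : a + b = N * d) :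
    ∃ F : MvPolynomial (Fin (N + 1)) k,
      F.IsHomogeneous d ∧ bind₁ (rncMonomial N) F = X 0 ^ a * X 1 ^ b := by
  induction d generalizing a b with
  | zero =>
    obtain ⟨rfl, rfl⟩ : a = 0 ∧ b = 0 := by simpa using h
    exact ⟨1, isHomogeneous_one _ _, by simp⟩
  | succ d ih =>
    rw [Nat.mul_succ] at h
    obtain ⟨F, hF, hFeq⟩ := ih (a - (N - min b N)) (b - min b N) (by omega)
    refine ⟨F * X ⟨min b N, by omega⟩, hF.mul (isHomogeneous_X _ _), ?_⟩
    rw [map_mul, hFeq, bind₁_X_right, rncMonomial, mul_mul_mul_comm, ← pow_add, ← pow_add]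
    congr 2 <;> simp only <;> omega

theorem exists_bind₁_rncMonomial_eq {G : MvPolynomial (Fin 2) k} (hG : G.IsHomogeneous (N * d)) :
    ∃ F : MvPolynomial (Fin (N + 1)) k, F.IsHomogeneous d ∧ bind₁ (rncMonomial N) F = G := by
  have hmon : ∀ s ∈ G.support, ∃ F : MvPolynomial (Fin (N + 1)) k, F.IsHomogeneous d ∧
      bind₁ (rncMonomial N) F = monomial s (coeff s G) := fun s hs => by
    obtain ⟨F, hF, hFeq⟩ := exists_bind₁_rncMonomial_eq_monomial (k := k) (N := N) d (s 0) (s 1) (by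
      simpa [Finsupp.weight_apply, Finsupp.sum_fintype] using hG (mem_support_iff.1 hs))
    refine ⟨C (coeff s G) * F, by simpa using (isHomogeneous_C _ (coeff s G)).mul hF, ?_⟩
    rw [map_mul, hFeq, bind₁_C_right, monomial_eq, Finsupp.prod_fintype _ _ (by simp),
      Fin.prod_univ_two]
  choose! F hF hFeq using hmon
  refine ⟨∑ s ∈ G.support, F s, IsHomogeneous.sum _ _ _ hF, ?_⟩
  rw [map_sum, sum_congr rfl hFeq, support_sum_monomial_coeff]

lemma isTangentRelation_rncDifferential_iff {r v : ι → Fin 2 → k} :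
    IsTangentRelation d (fun i => stdRNCvec k N (r i 0) (r i 1))
      (fun i => rncDifferential N (r i) (v i)) ↔ IsTangentRelation (N * d) r v := by
  refine ⟨fun h G hG => ?_, fun h F hF => ?_⟩
  · obtain ⟨F, hF, rfl⟩ := exists_bind₁_rncMonomial_eq hG
    simpa only [dirDeriv_bind₁_rncMonomial] using h F hF
  · simpa only [dirDeriv_bind₁_rncMonomial] using
      h (bind₁ _ F) (hF.aeval _ isHomogeneous_rncMonomial)

lemma rncMonomial_mul_rncMonomial {a b c e : Fin (N + 1)} (h : (a : ℕ) + b = c + e) :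
    (rncMonomial N a * rncMonomial N b : MvPolynomial (Fin 2) k) =
      rncMonomial N c * rncMonomial N e := by
  simp only [rncMonomial, mul_mul_mul_comm, ← pow_add]
  congr 2
  omega

/-- `y` is a tangent vector at `x` to the affine cone over the rational normal curve: it satisfies
the linearizations of the equations `x a * x b = x c * x e`, for `a + b = c + e`. -/
def IsRNCTangent (x y : Fin (N + 1) → k) : Prop :=
  ∀ a b c e : Fin (N + 1), (a : ℕ) + b = c + e → y a * x b + x a * y b = y c * x e + x c * y e

lemma isRNCTangent_rncDifferential (r v : Fin 2 → k) :
    IsRNCTangent (stdRNCvec k N (r 0) (r 1)) (rncDifferential N r v) := fun a b c e h => by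
  have hd := congrArg (dirDeriv r v) (rncMonomial_mul_rncMonomial h)
  simp only [dirDeriv_mul, eval_rncMonomial] at hd
  simp only [rncDifferential]
  linear_combination hd

lemma IsRNCTangent.eq_of_apply_zero_of_apply_one {x y z : Fin (N + 2) → k}
    (hy : IsRNCTangent x y) (hz : IsRNCTangent x z) (hx : x 0 ≠ 0) (h0 : y 0 = z 0)
    (h1 : y 1 = z 1) : y = z := by
  ext i
  induction i using Fin.induction with
  | zero => exact h0
  | succ i ih =>
    have hsum : ((0 : Fin (N + 2)) : ℕ) + i.succ = (1 : Fin (N + 2)) + i.castSucc := by simp; omega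
    have hyi := hy _ _ _ _ hsum
    have hzi := hz _ _ _ _ hsum
    rw [h0, h1, ih] at hyi
    exact mul_left_cancel₀ hx (by linear_combination hyi - hzi)

lemma IsRNCTangent.comp_rev {x y : Fin (N + 1) → k} (h : IsRNCTangent x y) :
    IsRNCTangent (x ∘ Fin.rev) (y ∘ Fin.rev) := fun _ _ _ _ hsum =>
  h _ _ _ _ (by simp only [Fin.val_rev]; omega)

lemma stdRNCvec_comp_rev (s t : k) : stdRNCvec k N s t ∘ Fin.rev = stdRNCvec k N t s := by
  ext j
  simp only [Function.comp_apply, stdRNCvec, Fin.val_rev, Nat.add_sub_add_right,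
    Nat.sub_sub_self j.is_le, mul_comm]

lemma rncDifferential_comp_rev (r v : Fin 2 → k) :
    rncDifferential N r v ∘ Fin.rev = rncDifferential N (r ∘ Fin.rev) (v ∘ Fin.rev) := by
  ext j
  simp only [Function.comp_apply, rncDifferential_apply, Fin.val_rev, Nat.add_sub_add_right,
    Nat.sub_sub_self j.is_le, Fin.rev_zero, Fin.reduceLast, Fin.isValue, Fin.reduceRev]
  ring

lemma existsUnique_rncDifferential_eq_of_apply_zero_ne_zero [CharZero k] {r : Fin 2 → k}
    (hr : r 0 ≠ 0) {y : Fin (N + 2) → k} (hy : IsRNCTangent (stdRNCvec k (N + 1) (r 0) (r 1)) y) :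
    ∃! v, rncDifferential (N + 1) r v = y := by
  have hx : stdRNCvec k (N + 1) (r 0) (r 1) 0 ≠ 0 := by simp [stdRNCvec, hr]
  have hN : (N + 1 : k) ≠ 0 := by exact_mod_cast N.succ_ne_zero
  have hiff (v) : rncDifferential (N + 1) r v = y ↔
      v 0 = y 0 / ((N + 1) * r 0 ^ N) ∧
        v 1 = (y 1 - v 0 * (N * r 0 ^ (N - 1) * r 1)) / r 0 ^ N := by
    have h0 : rncDifferential (N + 1) r v 0 = v 0 * ((N + 1) * r 0 ^ N) := by
      simp [rncDifferential_apply]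
    have h1 : rncDifferential (N + 1) r v 1 = v 0 * (N * r 0 ^ (N - 1) * r 1) + v 1 * r 0 ^ N := by
      simp [rncDifferential_apply]
    rw [eq_div_iff (by positivity), eq_div_iff (by positivity), ← h0, eq_sub_iff_add_eq', ← h1]
    exact ⟨fun h => by simp [h], fun h =>
      (isRNCTangent_rncDifferential r v).eq_of_apply_zero_of_apply_one hy hx h.1 h.2⟩
  simp only [hiff]
  let a := y 0 / ((N + 1) * r 0 ^ N)
  refine ⟨![a, (y 1 - a * (N * r 0 ^ (N - 1) * r 1)) / r 0 ^ N], ⟨rfl, rfl⟩, fun v hv => ?_⟩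
  ext i
  fin_cases i
  · exact hv.1
  · exact hv.2.trans (by rw [hv.1]; rfl)

theorem existsUnique_rncDifferential_eq [CharZero k] {r : Fin 2 → k} (hr : r ≠ 0)
    {y : Fin (N + 2) → k} (hy : IsRNCTangent (stdRNCvec k (N + 1) (r 0) (r 1)) y) :
    ∃! v, rncDifferential (N + 1) r v = y := by
  by_cases h0 : r 0 = 0
  · have h1 : (r ∘ Fin.rev) 0 ≠ 0 := fun h1 => hr (by ext i; fin_cases i; exacts [h0, h1])
    have hy' := hy.comp_rev
    rw [stdRNCvec_comp_rev] at hy'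
    have h := existsUnique_rncDifferential_eq_of_apply_zero_ne_zero h1 hy'
    rw [(Fin.rev_involutive.bijective.comp_right (γ := k)).existsUnique_iff] at h
    simpa only [← rncDifferential_comp_rev, Fin.rev_surjective.injective_comp_right.eq_iff] using h
  · exact existsUnique_rncDifferential_eq_of_apply_zero_ne_zero h0 hy

lemma rncDifferential_eq_zero_iff [CharZero k] {r v : Fin 2 → k} (hr : r ≠ 0) :
    rncDifferential (N + 1) r v = 0 ↔ v = 0 := by
  have hunique := existsUnique_rncDifferential_eq (N := N) (y := 0) hr (by simp [IsRNCTangent])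
  exact ⟨fun hv => hunique.unique hv (rncDifferential_zero r),
    fun hv => hv ▸ rncDifferential_zero r⟩

lemma IsTangentRelation.isRNCTangent [Infinite k] {r : ι → Fin 2 → k} {w : ι → Fin (N + 1) → k}
    (hr : ∀ i, r i ≠ 0) (hspan : ∀ i j, i ≠ j → r j ∉ span k {r i})
    (hw : IsTangentRelation (d + 2) (fun i => stdRNCvec k N (r i 0) (r i 1)) w)
    (hcard : Fintype.card ι ≤ N * d + 1) (i : ι) :
    IsRNCTangent (stdRNCvec k N (r i 0) (r i 1)) (w i) := fun a b c e hsum => by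
  let Q : MvPolynomial (Fin (N + 1)) k := X a * X b - X c * X e
  let x : ι → Fin (N + 1) → k := fun i => stdRNCvec k N (r i 0) (r i 1)
  let Z : ι → Jet k 2 := fun i => ⟨dirDeriv (x i) (w i) Q, 0⟩
  have hQ : Q.IsHomogeneous 2 :=
    ((isHomogeneous_X k a).mul (isHomogeneous_X k b)).sub
      ((isHomogeneous_X k c).mul (isHomogeneous_X k e))
  have hadm : IsAdmissible r Z := ⟨hr, hspan, fun i hi => absurd rfl hi⟩
  have hQx (i) : eval (x i) Q = 0 := by
    have h := congrArg (eval (r i)) (rncMonomial_mul_rncMonomial hsum)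
    simpa only [map_mul, eval_rncMonomial, Q, map_sub, eval_X, sub_eq_zero] using h
  have hrel : IsRelation (N * d) r Z := fun G hG => by
    obtain ⟨F, hF, rfl⟩ := exists_bind₁_rncMonomial_eq hG
    have hFQ : ∑ i, dirDeriv (x i) (w i) (F * Q) = 0 := hw (F * Q) (hF.mul hQ)
    simpa [Z, x, Jet.functional_apply, dirDeriv_mul, hQx, eval_bind₁, eval_rncMonomial,
      mul_comm] using hFQ
  have hdeg : deg Z = 0 := by
    by_contra hne
    have hge := add_two_le_deg_of_isRelation le_rfl hadm hrel (Nat.pos_of_ne_zero hne)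
    have hle : deg Z ≤ 1 * #univ :=
      deg_le_mul_card (fun i _ => Jet.deg_le_one_iff.2 rfl) (by simp)
    rw [card_univ] at hle
    omega
  have hzero := (Jet.deg_eq_zero_iff.1 (deg_eq_zero_iff.1 hdeg i)).1
  simp only [Z, Q, map_sub, dirDeriv_mul, dirDeriv_X, eval_X] at hzero
  linear_combination hzero

-- Quadrics through the curve reduce a relation to one along the curve, that is, on `P¹`.
theorem imposeIndependentConditions_stdRNCvec_iff [CharZero k] (hd : 4 ≤ d) {r : ι → Fin 2 → k}
    (hr : ∀ i, r i ≠ 0) (hspan : ∀ i j, i ≠ j → r j ∉ span k {r i}) :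
    (ImposeIndependentConditions d fun i => stdRNCvec k (N + 1) (r i 0) (r i 1)) ↔
      2 * Fintype.card ι ≤ (N + 1) * d + 1 := by
  rw [← imposeIndependentConditions_binary_iff (by positivity) hr hspan]
  refine ⟨fun h v hv => ?_, fun h w hw => ?_⟩
  · have hzero : (fun i => rncDifferential (N + 1) (r i) (v i)) = 0 :=
      h _ (isTangentRelation_rncDifferential_iff.2 hv)
    ext1 i
    exact (rncDifferential_eq_zero_iff (hr i)).1 (congrFun hzero i)
  · have hcard := (imposeIndependentConditions_binary_iff (by positivity) hr hspan).1 h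
    obtain ⟨e, rfl⟩ : ∃ e, d = e + 2 := ⟨d - 2, by omega⟩
    have htan := hw.isRNCTangent hr hspan (by nlinarith)
    choose v hv using fun i => (existsUnique_rncDifferential_eq (hr i) (htan i)).exists
    obtain rfl : (fun i => rncDifferential (N + 1) (r i) (v i)) = w := funext hv
    obtain rfl : v = 0 := h v (isTangentRelation_rncDifferential_iff.1 hw)
    exact funext fun i => rncDifferential_zero (r i)

end RationalNormalCurve

section PointsOnRNC

variable {k : Type*} [Field k] {ι : Type*} {N : ℕ}

lemma stdRNCvec_mul_mul (a s t : k) :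
    stdRNCvec k N (a * s) (a * t) = a ^ N • stdRNCvec k N s t := by
  ext j
  simp only [stdRNCvec, Pi.smul_apply, smul_eq_mul, mul_pow]
  rw [mul_mul_mul_comm, ← pow_add, Nat.sub_add_cancel j.is_le]

lemma exists_parameters_of_isOnRNC {g : (Fin (N + 1) → k) ≃ₗ[k] (Fin (N + 1) → k)}
    {p : ι → Fin (N + 1) → k} (hg : ∀ i, IsOnRNC g (p i))
    (hspan : ∀ i j, i ≠ j → p j ∉ span k {p i}) :
    ∃ (r : ι → Fin 2 → k) (c : ι → k), (∀ i, r i ≠ 0) ∧ (∀ i j, i ≠ j → r j ∉ span k {r i}) ∧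
      (∀ i, c i ≠ 0) ∧ p = fun i => c i • g (stdRNCvec k N (r i 0) (r i 1)) := by
  choose s t c hc hst hp using hg
  refine ⟨fun i => ![s i, t i], c, fun i => ?_, fun i j hij hmem => ?_, hc, funext hp⟩
  · simpa only [ne_eq, ← not_and_or, Matrix.cons_eq_zero_iff, Matrix.zero_empty, and_true]
      using hst i
  · obtain ⟨a, ha⟩ := Submodule.mem_span_singleton.1 hmem
    obtain ⟨hs, ht⟩ : a * s i = s j ∧ a * t i = t j := by simpa using ha
    refine hspan i j hij (Submodule.mem_span_singleton.2 ⟨c j * a ^ N / c i, ?_⟩)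
    rw [hp j, ← hs, ← ht, stdRNCvec_mul_mul, hp i, map_smul, smul_smul, smul_smul,
      div_mul_cancel₀ _ (hc i)]

theorem imposeIndependentConditions_iff_of_isOnRNC [CharZero k] [Fintype ι] {d : ℕ} (hd : 4 ≤ d)
    {g : (Fin (N + 2) → k) ≃ₗ[k] (Fin (N + 2) → k)} {p : ι → Fin (N + 2) → k}
    (hg : ∀ i, IsOnRNC g (p i)) (hspan : ∀ i j, i ≠ j → p j ∉ span k {p i}) :
    ImposeIndependentConditions d p ↔ 2 * Fintype.card ι ≤ (N + 1) * d + 1 := by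
  obtain ⟨r, c, hr, hr', hc, rfl⟩ := exists_parameters_of_isOnRNC hg hspan
  rw [imposeIndependentConditions_smul_map_iff hc,
    imposeIndependentConditions_stdRNCvec_iff hd hr hr']

lemma mul_sub_mul_ne_zero {r r' : Fin 2 → k} (hr : r ≠ 0) (h : r' ∉ span k {r}) :
    r' 1 * r 0 - r 1 * r' 0 ≠ 0 := by
  have hli := (LinearIndependent.pair_iff' hr (y := r')).2 fun a ha =>
    h (Submodule.mem_span_singleton.2 ⟨a, ha⟩)
  have hunit := (Matrix.linearIndependent_rows_iff_isUnit (A := Matrix.of ![r, r'])).1 hli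
  rw [Matrix.isUnit_iff_isUnit_det, isUnit_iff_ne_zero, Matrix.det_fin_two] at hunit
  simpa [mul_comm] using hunit

lemma linearIndependent_stdRNCvec {r : Fin (N + 1) → Fin 2 → k}
    (hr : ∀ i, r i ≠ 0) (hspan : ∀ i j, i ≠ j → r j ∉ span k {r i}) :
    LinearIndependent k fun i => stdRNCvec k N (r i 0) (r i 1) := by
  have hdet : (Matrix.projVandermonde (fun i => r i 1) fun i => r i 0).det ≠ 0 := by
    rw [Matrix.det_projVandermonde]
    refine prod_ne_zero_iff.2 fun i _ => prod_ne_zero_iff.2 fun j hj => ?_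
    exact mul_sub_mul_ne_zero (hr i) (hspan i j (mem_Ioi.1 hj).ne)
  have hrow : (Matrix.projVandermonde (fun i => r i 1) fun i => r i 0).row =
      fun i => stdRNCvec k N (r i 0) (r i 1) := by
    ext i j
    simp [Matrix.projVandermonde_apply, stdRNCvec, Fin.val_rev, mul_comm]
  exact hrow ▸ Matrix.linearIndependent_rows_of_det_ne_zero hdet

theorem eq_zero_of_forall_isOnRNC [Fintype ι] {g : (Fin (N + 1) → k) ≃ₗ[k] (Fin (N + 1) → k)}
    {p : ι → Fin (N + 1) → k} (hg : ∀ i, IsOnRNC g (p i))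
    (hspan : ∀ i j, i ≠ j → p j ∉ span k {p i}) (hcard : N + 1 ≤ Fintype.card ι)
    {l : Dual k (Fin (N + 1) → k)} (hl : ∀ i, l (p i) = 0) : l = 0 := by
  obtain ⟨r, c, hr, hr', hc, rfl⟩ := exists_parameters_of_isOnRNC hg hspan
  obtain ⟨f⟩ : Nonempty (Fin (N + 1) ↪ ι) :=
    Function.Embedding.nonempty_of_card_le (by simpa using hcard)
  have hli := linearIndependent_stdRNCvec (fun i => hr (f i)) fun i j hij =>
    hr' _ _ (f.injective.ne hij)
  have hlg : l ∘ₗ g.toLinearMap = 0 :=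
    LinearMap.ext_on_range (hli.span_eq_top_of_card_eq_finrank' (by simp)) fun i => by
      simpa [hc] using hl (f i)
  exact LinearMap.ext fun x => by simpa using LinearMap.congr_fun hlg (g.symm x)

end PointsOnRNC

section Locus

variable {k : Type*} [Field k]

lemma h1_eq_zero_iff_of_isOnRNC [CharZero k] {N d : ℕ} (hd : 4 ≤ d)
    {S : Finset (ProjSpace k (N + 1))} {g} (hg : ∀ q : S, IsOnRNC g q.1.rep) :
    h1 k (N + 1) d S = 0 ↔ 2 * #S ≤ (N + 1) * d + 1 := by
  rw [h1_eq_zero_iff (by simp; omega), imposeIndependentConditions_iff_of_isOnRNC hd hg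
    fun _ _ hne => rep_notMem_span_rep (Subtype.coe_ne_coe.2 hne), Fintype.card_coe]

lemma spans_of_isOnRNC {n : ℕ} {S : Finset (ProjSpace k n)} {g}
    (hg : ∀ q : S, IsOnRNC g q.1.rep) (hcard : n + 1 ≤ #S) : Spans k n S := by
  rw [spans_iff_exists_apply_rep_ne_zero]
  intro l hl
  by_contra! hzero
  exact hl (eq_zero_of_forall_isOnRNC hg
    (fun _ _ hne => rep_notMem_span_rep (Subtype.coe_ne_coe.2 hne)) (by simpa using hcard) hzero)

lemma h0_pos_of_h1_pos {n d : ℕ} {S : Finset (ProjSpace k n)} (h : 0 < h1 k n d S)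
    (hcard : (n + 1) * #S ≤ (n + d).choose n) : 0 < h0 k n d S := by
  rw [h1] at h
  zify at hcard ⊢
  linarith

theorem mem_minTerracini_of_isOnRNC [CharZero k] {N d : ℕ} (hd : 4 ≤ d)
    {S : Finset (ProjSpace k (N + 1))} (hcard : #S = 1 + ((N + 1) * d + 1) / 2)
    (hle : (N + 2) * #S ≤ (N + 1 + d).choose (N + 1)) {g} (hg : ∀ q : S, IsOnRNC g q.1.rep) :
    S ∈ minTerracini k (N + 1) d (#S) := by
  have hpos : 0 < h1 k (N + 1) d S :=
    (h1_nonneg (by simp; omega) S).lt_of_ne' fun h => by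
      rw [h1_eq_zero_iff_of_isOnRNC hd hg] at h
      omega
  have hspan : N + 2 ≤ #S := by
    have := Nat.mul_le_mul_left (N + 1) hd
    omega
  refine ⟨⟨rfl, spans_of_isOnRNC hg hspan, h0_pos_of_h1_pos hpos hle, hpos⟩, fun A hA => ?_⟩
  have hlt := card_lt_card hA
  rw [h1_eq_zero_iff_of_isOnRNC hd fun q : A => hg ⟨q.1, hA.1 q.2⟩]
  omega

theorem exists_isOnRNC_of_mem_minTerracini [CharZero k] {d : ℕ} (hd : 7 ≤ d)
    {S : Finset (ProjSpace k 3)} (hS : S ∈ minTerracini k 3 d (1 + (3 * d + 1) / 2)) :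
    ∃ g, ∀ q : S, IsOnRNC g q.1.rep := by
  have hd0 : (d : k) ≠ 0 := by simp; omega
  have hdep := mt (h1_eq_zero_iff hd0 S).2 hS.1.2.2.2.ne'
  obtain ⟨w, hw, hw0⟩ : ∃ w, IsTangentRelation d (fun q : S => q.1.rep) w ∧ w ≠ 0 := by
    simpa [ImposeIndependentConditions] using hdep
  exact (isMinimalConfiguration_rep hd0 hS).exists_isOnRNC hd (by simp [hS.1.1]) hw hw0

lemma four_mul_le_choose_three {d : ℕ} (hd : 4 ≤ d) :
    4 * (1 + (3 * d + 1) / 2) ≤ (3 + d).choose 3 := by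
  have hchoose := six_mul_choose_three d
  have hdiv : 2 * ((3 * d + 1) / 2) ≤ 3 * d + 1 := by omega
  nlinarith [Nat.mul_le_mul (show 6 ≤ d + 2 by omega) (show 6 ≤ d + 3 by omega)]

end Locus

end

end Terracini

theorem minTerracini_P3_first_case_general
    (k : Type*) [Field k] [CharZero k] (d : ℕ) (hd : 7 ≤ d)
    (S : Finset (ProjSpace k 3)) (hcard : S.card = 1 + (3 * d + 1) / 2) :
    S ∈ minTerracini k 3 d (1 + (3 * d + 1) / 2) ↔
      ∃ C : Set (ProjSpace k 3), IsRNC k 3 C ∧ ↑S ⊆ C := by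
  have hle : 4 * S.card ≤ (3 + d).choose 3 :=
    hcard ▸ Terracini.four_mul_le_choose_three (by omega)
  rw [Terracini.exists_isRNC_iff]
  exact ⟨Terracini.exists_isOnRNC_of_mem_minTerracini hd,
    fun ⟨_, hg⟩ => hcard ▸ Terracini.mem_minTerracini_of_isOnRNC (by omega) hcard hle hg⟩

/-- Theorem: for `d ≥ 7` and `x = 1 + ⌈3d/2⌉`, a set `S` of `x` points of `P^3` is
minimally Terracini iff it is contained in a rational normal curve (twisted cubic). -/
theorem minTerracini_P3_first_case
    (k : Type*) [Field k] [IsAlgClosed k] [CharZero k]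
    (d : ℕ) (hd : 7 ≤ d)
    (S : Finset (ProjSpace k 3)) (hcard : S.card = 1 + (3 * d + 1) / 2) :
    S ∈ minTerracini k 3 d (1 + (3 * d + 1) / 2) ↔
      ∃ C : Set (ProjSpace k 3), IsRNC k 3 C ∧ ↑S ⊆ C :=
  minTerracini_P3_first_case_general k d hd S hcard
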